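/- arXiv:math/0212290 — 3 statements merged into one kernel-verified Lean document; each statement's English description precedes it below -/
import Mathlib

section
/- H is a finitely generated module over its center Z(H). -/
/-- The defining relations of the affine Hecke algebra of type `A_2` (for `Gl_3`),
on the free algebra on four generators `T = X 0`, `T⁻¹ = X 1`, `S_1 = X 2`, `S_2 = X 3`. -/
inductive HeckeRel (R : Type) [CommRing R] (q : R) :
    FreeAlgebra R (Fin 4) → FreeAlgebra R (Fin 4) → Prop
  | TTinv : HeckeRel R q (FreeAlgebra.ι R 0 * FreeAlgebra.ι R 1) 1
  | TinvT : HeckeRel R q (FreeAlgebra.ι R 1 * FreeAlgebra.ι R 0) 1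
  | quad : HeckeRel R q
      ((FreeAlgebra.ι R 2 + 1) * (FreeAlgebra.ι R 2 - algebraMap R (FreeAlgebra R (Fin 4)) q)) 0
  | T3S1 : HeckeRel R q (FreeAlgebra.ι R 0 ^ 3 * FreeAlgebra.ι R 2)
      (FreeAlgebra.ι R 2 * FreeAlgebra.ι R 0 ^ 3)
  | braid : HeckeRel R q (FreeAlgebra.ι R 2 * FreeAlgebra.ι R 3 * FreeAlgebra.ι R 2)
      (FreeAlgebra.ι R 3 * FreeAlgebra.ι R 2 * FreeAlgebra.ι R 3)
  | TS2 : HeckeRel R q (FreeAlgebra.ι R 0 * FreeAlgebra.ι R 3)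
      (FreeAlgebra.ι R 2 * FreeAlgebra.ι R 0)

/-- The affine Hecke algebra `H_R` with parameter `q ∈ R`. -/
abbrev HeckeAlg (R : Type) [CommRing R] (q : R) := RingQuot (HeckeRel R q)

namespace HeckeAlg

variable (R : Type) [CommRing R] (q : R)

noncomputable def gen (i : Fin 4) : HeckeAlg R q :=
  RingQuot.mkAlgHom R (HeckeRel R q) (FreeAlgebra.ι R i)

noncomputable def T : HeckeAlg R q := gen R q 0
noncomputable def Tinv : HeckeAlg R q := gen R q 1
noncomputable def S1 : HeckeAlg R q := gen R q 2
noncomputable def S2 : HeckeAlg R q := gen R q 3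

theorem T_mul_Tinv : T R q * Tinv R q = 1 := by
  simpa [T, Tinv, gen, map_mul, map_one] using
    RingQuot.mkAlgHom_rel R (HeckeRel.TTinv (R := R) (q := q))

theorem Tinv_mul_T : Tinv R q * T R q = 1 := by
  simpa [T, Tinv, gen, map_mul, map_one] using
    RingQuot.mkAlgHom_rel R (HeckeRel.TinvT (R := R) (q := q))

theorem quad_rel : (S1 R q + 1) * (S1 R q - algebraMap R (HeckeAlg R q) q) = 0 := by
  simpa [S1, gen, map_mul, map_add, map_sub, map_one, map_zero, AlgHom.commutes] using
    RingQuot.mkAlgHom_rel R (HeckeRel.quad (R := R) (q := q))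

theorem T3_mul_S1 : T R q ^ 3 * S1 R q = S1 R q * T R q ^ 3 := by
  simpa [T, S1, gen, map_mul, map_pow] using
    RingQuot.mkAlgHom_rel R (HeckeRel.T3S1 (R := R) (q := q))

theorem braid_rel : S1 R q * S2 R q * S1 R q = S2 R q * S1 R q * S2 R q := by
  simpa [S1, S2, gen, map_mul] using
    RingQuot.mkAlgHom_rel R (HeckeRel.braid (R := R) (q := q))

theorem T_mul_S2 : T R q * S2 R q = S1 R q * T R q := by
  simpa [T, S1, S2, gen, map_mul] using
    RingQuot.mkAlgHom_rel R (HeckeRel.TS2 (R := R) (q := q))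

/-- The canonical (base change) ring homomorphism `H_R → H_S` induced by a ring
homomorphism `R → S` sending the parameter `q` to the parameter `q'`. -/
noncomputable def map {R S : Type} [CommRing R] [CommRing S] (f : R →+* S) (q : R) (q' : S)
    (h : f q = q') : HeckeAlg R q →+* HeckeAlg S q' := by
  subst h
  letI : Algebra R (HeckeAlg S (f q)) :=
    RingHom.toAlgebra' ((algebraMap S (HeckeAlg S (f q))).comp f)
      (fun c x => by simpa using Algebra.commutes (f c) x)
  refine RingQuot.lift
    ⟨((FreeAlgebra.lift R fun i => gen S (f q) i : _ →ₐ[R] HeckeAlg S (f q)) :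
        FreeAlgebra R (Fin 4) →+* HeckeAlg S (f q)), ?_⟩
  have key : ∀ i : Fin 4,
      (FreeAlgebra.lift R fun j => gen S (f q) j) (FreeAlgebra.ι R i) = gen S (f q) i :=
    fun i => FreeAlgebra.lift_ι_apply _ _
  have keyq : (FreeAlgebra.lift R fun j => gen S (f q) j)
      (algebraMap R (FreeAlgebra R (Fin 4)) q) = algebraMap S (HeckeAlg S (f q)) (f q) := by
    rw [AlgHom.commutes]
    rfl
  intro a b hab
  cases hab with
  | TTinv => simpa [key, T, Tinv] using T_mul_Tinv S (f q)
  | TinvT => simpa [key, T, Tinv] using Tinv_mul_T S (f q)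
  | quad => simpa [key, keyq, S1] using quad_rel S (f q)
  | T3S1 => simpa [key, T, S1] using T3_mul_S1 S (f q)
  | braid => simpa [key, S1, S2] using braid_rel S (f q)
  | TS2 => simpa [key, T, S1, S2] using T_mul_S2 S (f q)

/-- `S_1⁻¹ = q⁻¹ (S_1 - q + 1)`, where `qi` is an inverse of `q` in `R`. -/
noncomputable def S1i (qi : R) : HeckeAlg R q :=
  algebraMap R (HeckeAlg R q) qi * (S1 R q - algebraMap R (HeckeAlg R q) q + 1)

/-- `S_2⁻¹ = q⁻¹ (S_2 - q + 1)`, where `qi` is an inverse of `q` in `R`. -/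
noncomputable def S2i (qi : R) : HeckeAlg R q :=
  algebraMap R (HeckeAlg R q) qi * (S2 R q - algebraMap R (HeckeAlg R q) q + 1)

/-- The Bernstein elements `Y_1 = q S_1⁻¹ S_2⁻¹ T`, `Y_2 = S_2⁻¹ T S_1`,
`Y_3 = q⁻¹ T S_1 S_2`, where `qi` is an inverse of `q` in `R`. -/
noncomputable def Y (qi : R) : Fin 3 → HeckeAlg R q :=
  ![algebraMap R (HeckeAlg R q) q * S1i R q qi * S2i R q qi * T R q,
    S2i R q qi * T R q * S1 R q,
    algebraMap R (HeckeAlg R q) qi * T R q * S1 R q * S2 R q]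

end HeckeAlg

noncomputable section

/-- `H`, the affine Hecke algebra over `ℤ[q]` (with `q` an indeterminate). -/
abbrev HPoly : Type := HeckeAlg (Polynomial ℤ) Polynomial.X

end

/-! Strategy: with `a = T S₁ T⁻¹`, `b = S₁`, `c = S₂`, six integral Bernstein elements
`e1, …, e23` commute pairwise and are integral over the center; and `H` is generated as a left
module over the commutative algebra they generate by `T^k`, `a T^k`, `b T^k`, `c T^k`, `k < 3`. -/

namespace HeckeFin

section Abstract

variable {R A : Type} [CommRing R] [Ring A] [Algebra R A]

/-- The relations, in terms of three finite generators permuted by `t`. -/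
structure Dat (q : R) (t a b c : A) : Prop where
  ta : t * a = c * t
  tb : t * b = a * t
  tc : t * c = b * t
  aa : a * a = (q - 1) • a + q • (1 : A)
  bb : b * b = (q - 1) • b + q • (1 : A)
  cc : c * c = (q - 1) • c + q • (1 : A)
  bab : b * a * b = a * b * a
  cac : c * a * c = a * c * a
  cbc : c * b * c = b * c * b

def e1 (q : R) (t b c : A) : A := (b - (q - 1) • (1 : A)) * ((c - (q - 1) • (1 : A)) * t)
def e2 (q : R) (t b c : A) : A := (c - (q - 1) • (1 : A)) * (t * b)
def e3 (t b c : A) : A := t * (b * c)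
def e23 (t b c : A) : A := t * (t * (c * b))
def e13 (q : R) (t b c : A) : A := (b - (q - 1) • (1 : A)) * (t * (t * c))
def e12 (q : R) (t b c : A) : A := (c - (q - 1) • (1 : A)) * ((b - (q - 1) • (1 : A)) * (t * t))

theorem ext3 {x y z u v w : A} (h : x * y * z = u * v * w) (s : A) :
    x * (y * (z * s)) = u * (v * (w * s)) := by
  simpa only [mul_assoc] using congrArg (· * s) h

theorem ext2 {x y u v : A} (h : x * y = u * v) (s : A) : x * (y * s) = u * (v * s) := by
  simpa only [mul_assoc] using congrArg (· * s) h

theorem extq {q : R} {x : A} (h : x * x = (q - 1) • x + q • (1 : A)) (s : A) :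
    x * (x * s) = (q - 1) • (x * s) + q • s := by
  rw [← mul_assoc, h, add_mul, smul_mul_assoc, smul_mul_assoc, one_mul]

variable {q : R} {t a b c : A}

/-- All the identities between the `e`'s. -/
structure Ids (q : R) (t a b c E1 E2 E3 E12 E13 E23 : A) : Prop where
  p12 : E1 * E2 = q • E12
  p21 : E2 * E1 = q • E12
  p13 : E1 * E3 = q • E13
  p31 : E3 * E1 = q • E13
  p23 : E2 * E3 = q • E23
  p32 : E3 * E2 = q • E23
  d1 : E1 * E23 = q ^ 2 • (t * (t * t))
  d1' : E23 * E1 = q ^ 2 • (t * (t * t))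
  d2 : E2 * E13 = q ^ 2 • (t * (t * t))
  d2' : E13 * E2 = q ^ 2 • (t * (t * t))
  d3 : E3 * E12 = q ^ 2 • (t * (t * t))
  d3' : E12 * E3 = q ^ 2 • (t * (t * t))
  c112 : E1 * E12 = E12 * E1
  c113 : E1 * E13 = E13 * E1
  c212 : E2 * E12 = E12 * E2
  c223 : E2 * E23 = E23 * E2
  c313 : E3 * E13 = E13 * E3
  c323 : E3 * E23 = E23 * E3
  m1 : E12 * E13 = q • (E1 * (t * (t * t)))
  m1' : E13 * E12 = q • (E1 * (t * (t * t)))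
  m2 : E12 * E23 = q • (E2 * (t * (t * t)))
  m2' : E23 * E12 = q • (E2 * (t * (t * t)))
  m3 : E13 * E23 = q • (E3 * (t * (t * t)))
  m3' : E23 * E13 = q • (E3 * (t * (t * t)))
  z1t : (E1 + E2 + E3) * t = t * (E1 + E2 + E3)
  z1b : (E1 + E2 + E3) * b = b * (E1 + E2 + E3)
  z2t : (E12 + E13 + E23) * t = t * (E12 + E13 + E23)
  z2b : (E12 + E13 + E23) * b = b * (E12 + E13 + E23)
  z3b : (t * (t * t)) * b = b * (t * (t * t))
  s1 : E1 = (b * c - (q - 1) • b - (q - 1) • c + (q - 1) ^ 2 • 1) * t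
  s2 : E2 = (c * a - (q - 1) • a) * t
  s3 : E3 = a * b * t
  s12 : E12 = (c * b - (q - 1) • b - (q - 1) • c + (q - 1) ^ 2 • 1) * (t * t)
  s13 : E13 = (b * a - (q - 1) • a) * (t * t)
  s23 : E23 = a * c * (t * t)

set_option linter.unusedSimpArgs false in
set_option maxHeartbeats 2000000 in
theorem ids (h : Dat q t a b c) : Ids q t a b c (e1 q t b c) (e2 q t b c) (e3 t b c)
    (e12 q t b c) (e13 q t b c) (e23 t b c) := by
  obtain ⟨h1, h2, h3, h4, h5, h6, h7, h8, h9⟩ := h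
  have k1 := ext2 h1; have k2 := ext2 h2; have k3 := ext2 h3
  have k4 := extq h4; have k5 := extq h5; have k6 := extq h6
  have k7 := ext3 h7; have k8 := ext3 h8; have k9 := ext3 h9
  rw [mul_assoc, mul_assoc] at h7 h8 h9
  constructor <;>
  · simp only [e1, e2, e3, e12, e13, e23, mul_assoc, mul_add, add_mul, mul_sub, sub_mul,
      smul_mul_assoc, mul_smul_comm, smul_add, smul_sub, one_mul, mul_one, h1, h2, h3, h4, h5, h6,
      h7, h8, h9, k1, k2, k3, k4, k5, k6, k7, k8, k9]
    try module

end Abstract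

section Finite

theorem fg_adj {C A : Type} [CommRing C] [Ring A] [Algebra C A] {s : Set A} (hf : s.Finite)
    (hc : ∀ x ∈ s, ∀ y ∈ s, x * y = y * x) (hi : ∀ x ∈ s, IsIntegral C x) :
    (Subalgebra.toSubmodule (Algebra.adjoin C s)).FG := by
  have hcomm := Algebra.isMulCommutative_adjoin C hc
  let _ : CommRing (Algebra.adjoin C s) :=
    { (inferInstance : Ring (Algebra.adjoin C s)) with
      mul_comm := fun x y => hcomm.is_comm.comm x y }
  have hfin : ((Subtype.val : Algebra.adjoin C s → A) ⁻¹' s).Finite :=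
    hf.preimage Subtype.val_injective.injOn
  have h := fg_adjoin_of_finite (R := C) hfin (fun x hx => by
    have := hi x.1 hx
    exact (isIntegral_algHom_iff (Algebra.adjoin C s).val Subtype.val_injective).1 this)
  rw [Algebra.adjoin_adjoin_coe_preimage] at h
  have h2 := h.map (Algebra.adjoin C s).val.toLinearMap
  convert h2 using 1
  ext x
  simp

theorem int3 {C A : Type} [CommRing C] [Ring A] [Algebra C A] (x y w : A) (u v r : C)
    (hxy : x * y = y * x) (hxw : x * w = w * x)
    (h1 : x + y + w = algebraMap C A u) (h2 : x * y + x * w + y * w = algebraMap C A v)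
    (h3 : y * w * x = algebraMap C A r) : IsIntegral C x := by
  refine ⟨Polynomial.X ^ 3 - Polynomial.C u * Polynomial.X ^ 2 + Polynomial.C v * Polynomial.X
    - Polynomial.C r, by monicity!, ?_⟩
  rw [← Polynomial.aeval_def]
  simp only [map_sub, map_add, map_mul, map_pow, Polynomial.aeval_X, Polynomial.aeval_C,
    ← h1, ← h2, ← h3]
  have e1 : x * y * x = y * x ^ 2 := by rw [hxy, pow_two, mul_assoc]
  have e2 : x * w * x = w * x ^ 2 := by rw [hxw, pow_two, mul_assoc]
  simp only [add_mul, e1, e2, pow_succ, pow_zero, one_mul]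
  simp only [← mul_assoc]
  abel

variable {R A : Type} [CommRing R] [Ring A] [Algebra R A] {q : R} {t a b c : A}

set_option maxHeartbeats 2000000 in
theorem main (h : Dat q t a b c) (ti : A) (h1 : t * ti = 1) (h2 : ti * t = 1)
    (hgen : ∀ S : Subalgebra R A, t ∈ S → ti ∈ S → b ∈ S → c ∈ S → S = ⊤) :
    Module.Finite (Subring.center A) A := by
  have hc : c = ti * b * t := by rw [mul_assoc, ← h.tc, ← mul_assoc, h2, one_mul]
  have hcen : ∀ x : A, x * t = t * x → x * b = b * x → x ∈ Subring.center A := by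
    intro x ht hb
    have hti : x * ti = ti * x := by
      calc x * ti = ti * t * x * ti := by rw [h2, one_mul]
        _ = ti * (t * x) * ti := by rw [mul_assoc ti t x]
        _ = ti * x * (t * ti) := by rw [← ht]; simp only [mul_assoc]
        _ = ti * x := by rw [h1, mul_one]
    have hcx : x * c = c * x := by
      rw [hc, ← mul_assoc, ← mul_assoc, hti, mul_assoc ti x b, hb]
      simp only [mul_assoc, ht]
    have := hgen (Subalgebra.centralizer R {x})
      (by simpa [Subalgebra.mem_centralizer_iff] using ht)
      (by simpa [Subalgebra.mem_centralizer_iff] using hti)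
      (by simpa [Subalgebra.mem_centralizer_iff] using hb)
      (by simpa [Subalgebra.mem_centralizer_iff] using hcx)
    rw [Subring.mem_center_iff]
    intro g
    have hg : g ∈ Subalgebra.centralizer R {x} := by rw [this]; trivial
    exact ((Subalgebra.mem_centralizer_iff R).1 hg x rfl).symm
  have hsc : ∀ r : R, algebraMap R A r ∈ Subring.center A := fun r => by
    rw [Subring.mem_center_iff]; intro g; exact (Algebra.commutes r g).symm
  obtain ⟨p12, p21, p13, p31, p23, p32, d1, d1', d2, d2', d3, d3', c112, c113, c212, c223, c313,
    c323, m1, m1', m2, m2', m3, m3', z1t, z1b, z2t, z2b, z3b, s1, s2, s3, s12, s13, s23⟩ := ids h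
  generalize e1 q t b c = E1 at *
  generalize e2 q t b c = E2 at *
  generalize e3 t b c = E3 at *
  generalize e12 q t b c = E12 at *
  generalize e13 q t b c = E13 at *
  generalize e23 t b c = E23 at *
  have hz1 := hcen _ z1t z1b
  have hz2 := hcen _ z2t z2b
  have hz3 : t * (t * t) ∈ Subring.center A := hcen _ (by simp only [mul_assoc]) z3b
  have hz3c : ∀ x, x * (t * (t * t)) = (t * (t * t)) * x := fun x =>
    (Subring.mem_center_iff.1 hz3 x)
  have hi1 : ti * (ti * ti) * (t * (t * t)) = 1 := by
    calc _ = ti * (ti * (ti * t) * t) * t := by simp only [mul_assoc]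
      _ = 1 := by rw [h2, mul_one, h2, mul_one, h2]
  have hi2 : (t * (t * t)) * (ti * (ti * ti)) = 1 := by rw [← hz3c, hi1]
  have hzi : ti * (ti * ti) ∈ Subring.center A := by
    rw [Subring.mem_center_iff]
    intro g
    calc g * (ti * (ti * ti)) = (ti * (ti * ti)) * (t * (t * t)) * g * (ti * (ti * ti)) := by
          rw [hi1, one_mul]
      _ = (ti * (ti * ti)) * g * ((t * (t * t)) * (ti * (ti * ti))) := by
          rw [mul_assoc _ (t * (t * t)) g, ← hz3c]; simp only [mul_assoc]
      _ = _ := by rw [hi2, mul_one]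
  -- center closure under scalars
  have hsm : ∀ (r : R) (x : A), x ∈ Subring.center A → r • x ∈ Subring.center A := by
    intro r x hx; rw [Algebra.smul_def]; exact mul_mem (hsc r) hx
  have hIntegral : ∀ x y w : A, x * y = y * x → x * w = w * x → x + y + w ∈ Subring.center A →
      x * y + x * w + y * w ∈ Subring.center A → y * w * x ∈ Subring.center A →
      IsIntegral (Subring.center A) x := fun x y w k1 k2 k3 k4 k5 =>
    int3 x y w ⟨_, k3⟩ ⟨_, k4⟩ ⟨_, k5⟩ k1 k2 rfl rfl rfl
  let s : Set A := {E1, E2, E3, E12, E13, E23}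
  have hs : (Subalgebra.toSubmodule (Algebra.adjoin (Subring.center A) s)).FG := by
    have hw1 : q • (E12 + E13 + E23) ∈ Subring.center A := hsm _ _ hz2
    have hw2 : q • ((E1 + E2 + E3) * (t * (t * t))) ∈ Subring.center A :=
      hsm _ _ (mul_mem hz1 hz3)
    have hw3 : q • q ^ 2 • (t * (t * t)) ∈ Subring.center A := hsm _ _ (hsm _ _ hz3)
    have hw4 : q • q ^ 2 • (t * (t * t)) * (t * (t * t)) ∈ Subring.center A := mul_mem hw3 hz3
    apply fg_adj
    · simp [s]
    · have hcc : ∀ x ∈ s, ∀ y ∈ s, x * y = y * x := by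
        simp only [s, Set.mem_insert_iff, Set.mem_singleton_iff]
        rintro x (rfl | rfl | rfl | rfl | rfl | rfl) y (rfl | rfl | rfl | rfl | rfl | rfl) <;>
        first
        | rfl
        | simp only [p12, p21, p13, p31, p23, p32, d1, d1', d2, d2', d3, d3', c112, c113, c212, c223,
            c313, c323, m1, m1', m2, m2', m3, m3']
      exact hcc
    · simp only [s, Set.mem_insert_iff, Set.mem_singleton_iff]
      have comm3 : ∀ x y : A, q • (x * y * (t * (t * t))) = q • (x * (t * (t * t)) * y) := by
        intro x y; rw [mul_assoc, hz3c, ← mul_assoc]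
      rintro x (rfl | rfl | rfl | rfl | rfl | rfl)
      · refine hIntegral x E2 E3 (p12.trans p21.symm) (p13.trans p31.symm) hz1 ?_ ?_
        · rw [p12, p13, p23, ← smul_add, ← smul_add]; exact hw1
        · rw [p23, smul_mul_assoc, d1']; exact hw3
      · refine hIntegral x E1 E3 (p21.trans p12.symm) (p23.trans p32.symm) ?_ ?_ ?_
        · convert hz1 using 1; abel
        · rw [p21, p23, p13]; convert hw1 using 1; module
        · rw [p13, smul_mul_assoc, d2']; exact hw3
      · refine hIntegral x E1 E2 (p31.trans p13.symm) (p32.trans p23.symm) ?_ ?_ ?_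
        · convert hz1 using 1; abel
        · rw [p31, p32, p12]; convert hw1 using 1; module
        · rw [p12, smul_mul_assoc, d3']; exact hw3
      · refine hIntegral x E13 E23 (m1.trans m1'.symm) (m2.trans m2'.symm) hz2 ?_ ?_
        · rw [m1, m2, m3]; convert hw2 using 1; simp only [add_mul, smul_add]
        · rw [m3, smul_mul_assoc, mul_assoc, ← hz3c, ← mul_assoc, d3, ← smul_mul_assoc]; exact hw4
      · refine hIntegral x E12 E23 (m1'.trans m1.symm) (m3.trans m3'.symm) ?_ ?_ ?_
        · convert hz2 using 1; abel
        · rw [m1', m2, m3]; convert hw2 using 1; simp only [add_mul, smul_add]; abel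
        · rw [m2, smul_mul_assoc, mul_assoc, ← hz3c, ← mul_assoc, d2, ← smul_mul_assoc]; exact hw4
      · refine hIntegral x E12 E13 (m2'.trans m2.symm) (m3'.trans m3.symm) ?_ ?_ ?_
        · convert hz2 using 1; abel
        · rw [m2', m3', m1]; convert hw2 using 1; simp only [add_mul, smul_add]; abel
        · rw [m1, smul_mul_assoc, mul_assoc, ← hz3c, ← mul_assoc, d1, ← smul_mul_assoc]; exact hw4
  -- the finite module
  let F : Fin 4 → A := ![1, a, b, c]
  let G : Set A := Set.range fun p : Fin 4 × Fin 3 => F p.1 * t ^ (p.2 : ℕ)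
  let N0 : Submodule (Subring.center A) A := Submodule.span _ G
  let M : Submodule (Subring.center A) A :=
    Subalgebra.toSubmodule (Algebra.adjoin (Subring.center A) s) * N0
  have hAA := (Algebra.adjoin (Subring.center A) s).isIdempotentElem_toSubmodule.eq
  have hM : M.FG := hs.mul (Submodule.fg_span (Set.finite_range _))
  have hE : ∀ y ∈ s, ∀ m ∈ M, y * m ∈ M := by
    intro y hy m hm
    have : y * m ∈ Subalgebra.toSubmodule (Algebra.adjoin (Subring.center A) s) * M :=
      Submodule.mul_mem_mul (Algebra.subset_adjoin hy) hm
    rwa [← mul_assoc, hAA] at this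
  have hN : ∀ g ∈ N0, g ∈ M := by
    intro g hg
    have : (1 : A) * g ∈ M := Submodule.mul_mem_mul (one_mem (Algebra.adjoin _ s)) hg
    rwa [one_mul] at this
  have hstab : ∀ x, (∀ g ∈ G, g * x ∈ M) → ∀ m ∈ M, m * x ∈ M := by
    intro x hx m hm
    have hN0 : ∀ n ∈ N0, n * x ∈ M := by
      intro n hn
      induction hn using Submodule.span_induction with
      | mem y hy => exact hx y hy
      | zero => rw [zero_mul]; exact zero_mem _
      | add y z _ _ hy hz => rw [add_mul]; exact add_mem hy hz
      | smul r y _ hy => rw [smul_mul_assoc]; exact M.smul_mem r hy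
    induction hm using Submodule.mul_induction_on' with
    | mem_mul_mem u hu n hn =>
      rw [mul_assoc]
      have : u * (n * x) ∈ Subalgebra.toSubmodule (Algebra.adjoin (Subring.center A) s) * M :=
        Submodule.mul_mem_mul hu (hN0 n hn)
      rwa [← mul_assoc, hAA] at this
    | add y _ z _ hy hz => rw [add_mul]; exact add_mem hy hz
  have hcM : ∀ z ∈ Subring.center A, ∀ m ∈ M, z * m ∈ M := fun z hz m hm =>
    M.smul_mem (⟨z, hz⟩ : Subring.center A) hm
  have hRM : ∀ (r : R), ∀ m ∈ M, r • m ∈ M := fun r m hm => by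
    rw [Algebra.smul_def]; exact hcM _ (hsc r) _ hm
  have hF : ∀ i k, F i * t ^ k ∈ M := by
    intro i k
    induction k using Nat.strong_induction_on with
    | _ k ih =>
      by_cases hk : k < 3
      · exact hN _ (Submodule.subset_span ⟨(i, ⟨k, hk⟩), rfl⟩)
      · obtain ⟨j, rfl⟩ : ∃ j, k = j + 3 := ⟨k - 3, by omega⟩
        have e : F i * t ^ (j + 3) = (t * (t * t)) * (F i * t ^ j) := by
          rw [← hz3c, mul_assoc, pow_add]; simp only [pow_succ, pow_zero, one_mul, mul_assoc]
        rw [e]; exact hcM _ hz3 _ (ih j (by omega))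
  have f0 : ∀ k, t ^ k ∈ M := fun k => by simpa [F] using hF 0 k
  have fa : ∀ k, a * t ^ k ∈ M := fun k => by simpa [F] using hF 1 k
  have fb : ∀ k, b * t ^ k ∈ M := fun k => by simpa [F] using hF 2 k
  have fc : ∀ k, c * t ^ k ∈ M := fun k => by simpa [F] using hF 3 k
  have hW1 : ∀ x, (∀ k, x * t * t ^ k ∈ M) → ∀ k, x * t ^ k ∈ M := by
    intro x hx k
    have e : x * t ^ k = (ti * (ti * ti)) * (x * t * t ^ (k + 2)) := by
      have : x * t * t ^ (k + 2) = (t * (t * t)) * (x * t ^ k) := by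
        rw [← hz3c, add_comm k 2, pow_add, pow_two, mul_assoc, mul_assoc, mul_assoc,
          ← mul_assoc _ _ (t ^ k)]
        simp only [mul_assoc, (Commute.pow_self t k).eq.symm]
        simp only [← mul_assoc, ← pow_succ, ← pow_succ']
      rw [this, ← mul_assoc, hi1, one_mul]
    rw [e]; exact hcM _ hzi _ (hx _)
  have hW2 : ∀ x, (∀ k, x * (t * t) * t ^ k ∈ M) → ∀ k, x * t ^ k ∈ M := by
    intro x hx
    apply hW1; apply hW1; simpa only [mul_assoc] using hx
  have E1M : ∀ k, E1 * t ^ k ∈ M := fun k => hE _ (by simp [s]) _ (f0 k)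
  have E2M : ∀ k, E2 * t ^ k ∈ M := fun k => hE _ (by simp [s]) _ (f0 k)
  have E3M : ∀ k, E3 * t ^ k ∈ M := fun k => hE _ (by simp [s]) _ (f0 k)
  have E12M : ∀ k, E12 * t ^ k ∈ M := fun k => hE _ (by simp [s]) _ (f0 k)
  have E13M : ∀ k, E13 * t ^ k ∈ M := fun k => hE _ (by simp [s]) _ (f0 k)
  have E23M : ∀ k, E23 * t ^ k ∈ M := fun k => hE _ (by simp [s]) _ (f0 k)
  have sh1 : ∀ x, (∀ k, x * t ^ k ∈ M) → ∀ k, x * t * t ^ k ∈ M := by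
    intro x hx k; rw [mul_assoc, ← pow_succ']; exact hx _
  have sh2 : ∀ x, (∀ k, x * t ^ k ∈ M) → ∀ k, x * (t * t) * t ^ k ∈ M := by
    intro x hx k; rw [← mul_assoc]; exact sh1 _ (sh1 _ hx) k
  have bc : ∀ k, b * c * t ^ k ∈ M := by
    apply hW1; intro k
    have e : b * c * t * t ^ k = E1 * t ^ k + (q - 1) • (b * t * t ^ k) + (q - 1) • (c * t * t ^ k)
        - (q - 1) ^ 2 • t ^ (k + 1) := by
      rw [s1, pow_succ' t k]; simp only [add_mul, sub_mul, smul_mul_assoc, one_mul]; abel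
    rw [e]
    exact sub_mem (add_mem (add_mem (E1M k) (hRM _ _ (sh1 _ fb k))) (hRM _ _ (sh1 _ fc k)))
      (hRM _ _ (f0 _))
  have cb : ∀ k, c * b * t ^ k ∈ M := by
    apply hW2; intro k
    have e : c * b * (t * t) * t ^ k = E12 * t ^ k + (q - 1) • (b * (t * t) * t ^ k)
        + (q - 1) • (c * (t * t) * t ^ k) - (q - 1) ^ 2 • t ^ (k + 2) := by
      rw [s12, add_comm k 2, pow_add t, pow_two t]
      simp only [add_mul, sub_mul, smul_mul_assoc, one_mul]; abel
    rw [e]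
    exact sub_mem (add_mem (add_mem (E12M k) (hRM _ _ (sh2 _ fb k))) (hRM _ _ (sh2 _ fc k)))
      (hRM _ _ (f0 _))
  have ca : ∀ k, c * a * t ^ k ∈ M := by
    apply hW1; intro k
    have e : c * a * t * t ^ k = E2 * t ^ k + (q - 1) • (a * t * t ^ k) := by
      rw [s2]; simp only [sub_mul, smul_mul_assoc]; abel
    rw [e]; exact add_mem (E2M k) (hRM _ _ (sh1 _ fa k))
  have ba : ∀ k, b * a * t ^ k ∈ M := by
    apply hW2; intro k
    have e : b * a * (t * t) * t ^ k = E13 * t ^ k + (q - 1) • (a * (t * t) * t ^ k) := by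
      rw [s13]; simp only [sub_mul, smul_mul_assoc]; abel
    rw [e]; exact add_mem (E13M k) (hRM _ _ (sh2 _ fa k))
  have ab : ∀ k, a * b * t ^ k ∈ M := by
    apply hW1; rw [← s3]; exact E3M
  have ac : ∀ k, a * c * t ^ k ∈ M := by
    apply hW2; rw [← s23]; exact E23M
  have sq : ∀ x : A, x * x = (q - 1) • x + q • (1 : A) → (∀ k, x * t ^ k ∈ M) →
      ∀ k, x * x * t ^ k ∈ M := by
    intro x hx hxM k
    rw [hx, add_mul, smul_mul_assoc, smul_mul_assoc, one_mul]
    exact add_mem (hRM _ _ (hxM k)) (hRM _ _ (f0 k))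
  have aa := sq a h.aa fa
  have bb := sq b h.bb fb
  have cc := sq c h.cc fc
  have hpush : ∀ k : ℕ, t ^ k * b = a * t ^ k ∨ t ^ k * b = b * t ^ k ∨ t ^ k * b = c * t ^ k := by
    intro k
    induction k with
    | zero => simp
    | succ k ih =>
      rw [pow_succ', mul_assoc]
      rcases ih with e | e | e <;> rw [e, ← mul_assoc]
      · right; right; rw [h.ta, mul_assoc]
      · left; rw [h.tb, mul_assoc]
      · right; left; rw [h.tc, mul_assoc]
  have stT : ∀ m ∈ M, m * t ∈ M := by
    apply hstab
    rintro _ ⟨⟨i, k⟩, rfl⟩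
    dsimp only
    rw [mul_assoc, ← pow_succ]; exact hF _ _
  have stB : ∀ m ∈ M, m * b ∈ M := by
    apply hstab
    rintro _ ⟨⟨i, k⟩, rfl⟩
    dsimp only
    rw [mul_assoc]
    rcases hpush k with e | e | e <;> rw [e, ← mul_assoc] <;> fin_cases i <;>
      simp only [F, Fin.isValue, Fin.mk_one, Fin.zero_eta, Fin.reduceFinMk, Matrix.cons_val, one_mul,
        fa, fb, fc, aa, ab, ac, ba, bb, bc, ca, cb, cc]
  have stTi : ∀ m ∈ M, m * ti ∈ M := by
    intro m hm
    have e : m * ti = ti * (ti * ti) * (m * t * t) := by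
      rw [← Subring.mem_center_iff.1 hzi]
      calc m * ti = m * (t * (t * ti) * ti) * ti := by rw [h1, mul_one, h1, mul_one]
        _ = _ := by simp only [mul_assoc]
    rw [e]; exact hcM _ hzi _ (stT _ (stT _ hm))
  let S : Subalgebra R A :=
    { carrier := {x | ∀ m ∈ M, m * x ∈ M}
      mul_mem' := fun {x y} hx hy m hm => by rw [← mul_assoc]; exact hy _ (hx _ hm)
      add_mem' := fun {x y} hx hy m hm => by rw [mul_add]; exact add_mem (hx _ hm) (hy _ hm)
      algebraMap_mem' := fun r m hm => by rw [← Algebra.commutes]; exact hcM _ (hsc r) _ hm }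
  have hS : S = ⊤ := hgen S stT stTi stB (by
    intro m hm
    rw [hc, ← mul_assoc, ← mul_assoc]; exact stT _ (stB _ (stTi _ hm)))
  refine ⟨?_⟩
  have : (⊤ : Submodule (Subring.center A) A) = M := by
    symm
    rw [eq_top_iff]
    intro x _
    have hx : x ∈ S := by rw [hS]; trivial
    have h1M : (1 : A) ∈ M := by simpa using f0 0
    simpa using hx 1 h1M
  rw [this]; exact hM

theorem main2 {R A : Type} [CommRing R] [Ring A] [Algebra R A] {q : R} {t ti b c : A}
    (h1 : t * ti = 1) (h2 : ti * t = 1) (hq : (b + 1) * (b - algebraMap R A q) = 0)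
    (h3 : t ^ 3 * b = b * t ^ 3) (hbr : b * c * b = c * b * c) (htc : t * c = b * t)
    (hgen : ∀ S : Subalgebra R A, t ∈ S → ti ∈ S → b ∈ S → c ∈ S → S = ⊤) :
    Module.Finite (Subring.center A) A := by
  have can : ∀ x y : A, t * x = t * y → x = y := by
    intro x y h
    have := congrArg (ti * ·) h
    simpa only [← mul_assoc, h2, one_mul] using this
  have canr : ∀ x y : A, x * t = y * t → x = y := by
    intro x y h
    have := congrArg (· * ti) h
    simpa only [mul_assoc, h1, mul_one] using this
  have hbb : b * b = (q - 1) • b + q • (1 : A) := by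
    rw [sub_smul, one_smul, Algebra.smul_def, Algebra.smul_def, mul_one]
    have e : (b + 1) * (b - algebraMap R A q)
        = b * b - b * algebraMap R A q + b - algebraMap R A q := by noncomm_ring
    rw [e, ← Algebra.commutes] at hq
    rw [← sub_eq_zero, ← hq]; abel
  obtain ⟨a, ha⟩ : ∃ a, a = t * b * ti := ⟨_, rfl⟩
  have htb : t * b = a * t := by rw [ha, mul_assoc, h2, mul_one]
  have hta : t * a = c * t := by
    apply can
    apply canr
    calc t * (t * a) * t = t ^ 3 * b := by
          rw [mul_assoc t, mul_assoc t a t, ← htb]; simp only [pow_succ, pow_zero, one_mul, mul_assoc]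
      _ = b * t ^ 3 := h3
      _ = t * (c * t) * t := by
          rw [← mul_assoc t c t, htc]; simp only [pow_succ, pow_zero, one_mul, mul_assoc]
  have push : ∀ {x x' y y' : A}, t * x = x' * t → t * y = y' * t →
      t * (x * y) = x' * y' * t := by
    intro x x' y y' hx hy
    rw [← mul_assoc, hx, mul_assoc, hy, mul_assoc]
  have hquad : ∀ {x y : A}, t * x = y * t → x * x = (q - 1) • x + q • (1 : A) →
      y * y = (q - 1) • y + q • (1 : A) := by
    intro x y hxy hx
    apply canr
    rw [← push hxy hxy, hx, mul_add, add_mul, mul_smul_comm, mul_smul_comm, smul_mul_assoc,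
      smul_mul_assoc, hxy, mul_one, one_mul]
  have haa := hquad htb hbb
  have hcc := hquad hta haa
  -- conjugating the braid relation `b c b = c b c` by `t`
  have hab : a * b * a = b * a * b := by
    apply canr
    rw [← push (push htb htc) htb, ← push (push htc htb) htc, hbr]
  have hca : c * a * c = a * c * a := by
    apply canr
    rw [← push (push hta htb) hta, ← push (push htb hta) htb, hab]
  exact main (q := q) (a := a)
    ⟨hta, htb, htc, haa, hbb, hcc, hab.symm, hca, hbr.symm⟩ ti h1 h2 hgen

end Finite

end HeckeFin

/-- `H` is a finitely generated module over its center `Z(H)`. -/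
theorem statement2 : Module.Finite (Subring.center HPoly) HPoly := by
  let R := Polynomial ℤ
  let q : R := Polynomial.X
  let t : HPoly := HeckeAlg.T R q
  let ti : HPoly := HeckeAlg.Tinv R q
  let b : HPoly := HeckeAlg.S1 R q
  let c : HPoly := HeckeAlg.S2 R q
  have h1 : t * ti = 1 := HeckeAlg.T_mul_Tinv R q
  have h2 : ti * t = 1 := HeckeAlg.Tinv_mul_T R q
  have hq : (b + 1) * (b - algebraMap R HPoly q) = 0 := HeckeAlg.quad_rel R q
  have h3 : t ^ 3 * b = b * t ^ 3 := HeckeAlg.T3_mul_S1 R q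
  have hbr : b * c * b = c * b * c := HeckeAlg.braid_rel R q
  have htc : t * c = b * t := HeckeAlg.T_mul_S2 R q
  have hgen : ∀ S : Subalgebra R HPoly, t ∈ S → ti ∈ S → b ∈ S → c ∈ S → S = ⊤ := by
    intro S m0 m1 m2 m3
    rw [eq_top_iff]
    rintro x -
    obtain ⟨y, rfl⟩ := RingQuot.mkAlgHom_surjective R (HeckeRel R q) x
    induction y using FreeAlgebra.induction with
    | grade0 r => rw [AlgHom.commutes]; exact S.algebraMap_mem r
    | grade1 i =>
      fin_cases i
      · exact m0
      · exact m1
      · exact m2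
      · exact m3
    | mul x y hx hy => rw [map_mul]; exact S.mul_mem hx hy
    | add x y hx hy => rw [map_add]; exact S.add_mem hx hy
  exact HeckeFin.main2 (q := q) h1 h2 hq h3 hbr htc hgen
end

section
/- In H_{Z[q^{±1}]}, the elements Y_1, Y_2, Y_3 are invertible and pairwise commute: Y_iY_j = Y_jY_i for all 1 ≤ i, j ≤ 3. -/
noncomputable section

/-- `H_{ℤ[q^{±1}]}`, the base change of `H` to the Laurent polynomial ring `ℤ[q,q⁻¹]`. -/
abbrev HLau : Type := HeckeAlg (LaurentPolynomial ℤ) (LaurentPolynomial.T 1)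

/-- The canonical map `ι : H → H_{ℤ[q^{±1}]}`. -/
def ιLau : HPoly →+* HLau :=
  HeckeAlg.map Polynomial.toLaurent Polynomial.X (LaurentPolynomial.T 1) Polynomial.toLaurent_X

/-- The Bernstein elements `Y_1, Y_2, Y_3` of `H_{ℤ[q^{±1}]}`
(where `S_i⁻¹ = q⁻¹(S_i - q + 1)` and `q⁻¹` is the Laurent monomial `T (-1)`). -/
def YLau : Fin 3 → HLau :=
  HeckeAlg.Y (LaurentPolynomial ℤ) (LaurentPolynomial.T 1) (LaurentPolynomial.T (-1))

/-- The image of `q` in `H_{ℤ[q^{±1}]}`. -/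
def qLau : HLau := algebraMap (LaurentPolynomial ℤ) HLau (LaurentPolynomial.T 1)

/-- The image of `q⁻¹` in `H_{ℤ[q^{±1}]}`. -/
def qLauInv : HLau := algebraMap (LaurentPolynomial ℤ) HLau (LaurentPolynomial.T (-1))

/-- The structure map of the `ℤ[q]`-algebra `H_{ℤ[q^{±1}]}`, i.e. `ℤ[q] → ℤ[q,q⁻¹] → H_{ℤ[q^{±1}]}`.
A `ℤ[q]`-subalgebra of `H_{ℤ[q^{±1}]}` is a subring containing the range of this map. -/
def structZq : Polynomial ℤ →+* HLau :=
  (algebraMap (LaurentPolynomial ℤ) HLau).comp Polynomial.toLaurent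

end

section Helpers

variable {G : Type*} [Group G] {t a b : G}

/-- `T² S₂ T⁻² = T S₁ T⁻¹` and `T² S₁ = S₂ T²`. -/
theorem grp_tta (h3 : t ^ 3 * a = a * t ^ 3) (hs : t * b = a * t) :
    t * (t * a) = b * (t * t) := by
  have hb : b = t⁻¹ * (a * t) := by rw [← hs]; group
  have : t * (t * (t * a)) = a * (t * (t * t)) := by
    simpa [pow_succ, mul_assoc] using h3
  apply mul_left_cancel (a := t)
  rw [this, hb]
  group

theorem grp_comm12 (h3 : t ^ 3 * a = a * t ^ 3) (hs : t * b = a * t)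
    (hb : a * b * a = b * a * b) :
    (a⁻¹ * b⁻¹ * t) * (b⁻¹ * t * a) = (b⁻¹ * t * a) * (a⁻¹ * b⁻¹ * t) := by
  have h1 := grp_tta h3 hs
  have h2 : t * b⁻¹ = a⁻¹ * t := by
    rw [eq_inv_mul_iff_mul_eq, ← mul_assoc, ← hs]; group
  have h4 : a⁻¹ * b⁻¹ * a⁻¹ = b⁻¹ * a⁻¹ * b⁻¹ := by
    simpa [mul_assoc] using congrArg (·⁻¹) hb
  calc (a⁻¹ * b⁻¹ * t) * (b⁻¹ * t * a) = a⁻¹ * b⁻¹ * (t * b⁻¹) * (t * a) := by group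
    _ = (a⁻¹ * b⁻¹ * a⁻¹) * (t * (t * a)) := by rw [h2]; group
    _ = b⁻¹ * (a⁻¹ * t) * t := by rw [h4, h1]; group
    _ = _ := by rw [← h2]; group

theorem grp_comm13 (h3 : t ^ 3 * a = a * t ^ 3) (hs : t * b = a * t)
    (hb : a * b * a = b * a * b) :
    (a⁻¹ * b⁻¹ * t) * (t * a * b) = (t * a * b) * (a⁻¹ * b⁻¹ * t) := by
  have h1 := grp_tta h3 hs
  have h2 : t * b⁻¹ = a⁻¹ * t := by
    rw [eq_inv_mul_iff_mul_eq, ← mul_assoc, ← hs]; group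
  have h4 : a * b * a⁻¹ = b⁻¹ * a * b := by
    rw [mul_inv_eq_iff_eq_mul, mul_assoc, mul_assoc, eq_inv_mul_iff_mul_eq,
      ← mul_assoc, ← mul_assoc, ← hb]
  calc (a⁻¹ * b⁻¹ * t) * (t * a * b) = a⁻¹ * b⁻¹ * (t * (t * a)) * b := by group
    _ = a⁻¹ * t * (t * b) := by rw [h1]; group
    _ = (t * b⁻¹) * (a * t) := by rw [hs, h2]
    _ = t * (b⁻¹ * a * b) * (b⁻¹ * t) := by group
    _ = _ := by rw [← h4]; group

theorem grp_comm23 (h3 : t ^ 3 * a = a * t ^ 3) (hs : t * b = a * t)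
    (hb : a * b * a = b * a * b) :
    (b⁻¹ * t * a) * (t * a * b) = (t * a * b) * (b⁻¹ * t * a) := by
  have h1 := grp_tta h3 hs
  -- `c = t a t⁻¹`
  have hc : b * (t * a * t⁻¹) * b = (t * a * t⁻¹) * b * (t * a * t⁻¹) := by
    have e : t * t * (a * b * a) * (t * t)⁻¹ = t * t * (b * a * b) * (t * t)⁻¹ := by rw [hb]
    have e1 : t * t * a * (t * t)⁻¹ = b := by rw [mul_assoc t t a, h1]; group
    have e2 : t * t * b * (t * t)⁻¹ = t * a * t⁻¹ := by rw [mul_assoc t t b, hs]; group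
    calc b * (t * a * t⁻¹) * b
        = (t * t * a * (t * t)⁻¹) * (t * t * b * (t * t)⁻¹) * (t * t * a * (t * t)⁻¹) := by
          rw [e1, e2]
      _ = t * t * (a * b * a) * (t * t)⁻¹ := by group
      _ = t * t * (b * a * b) * (t * t)⁻¹ := e
      _ = (t * t * b * (t * t)⁻¹) * (t * t * a * (t * t)⁻¹) * (t * t * b * (t * t)⁻¹) := by group
      _ = _ := by rw [e1, e2]
  calc (b⁻¹ * t * a) * (t * a * b) = b⁻¹ * (t * a * t⁻¹) * (t * (t * a)) * b := by group
    _ = b⁻¹ * (t * a * t⁻¹) * b * t * (t * b) := by rw [h1]; group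
    _ = b⁻¹ * ((t * a * t⁻¹) * b * (t * a * t⁻¹)) * (t * t) := by rw [hs]; group
    _ = (t * a * t⁻¹) * (b * (t * t)) := by rw [← hc]; group
    _ = _ := by rw [← h1]; group

end Helpers

theorem hecke_inv {A : Type*} [Ring A] (s q qi : A) (hq : qi * q = 1)
    (hqc : ∀ x, q * x = x * q) (hqic : ∀ x, qi * x = x * qi)
    (h : (s + 1) * (s - q) = 0) :
    s * (qi * (s - q + 1)) = 1 ∧ (qi * (s - q + 1)) * s = 1 := by
  have h' : s * (s - q + 1) = q := by
    have : s * (s - q + 1) = (s + 1) * (s - q) + q := by noncomm_ring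
    rw [this, h, zero_add]
  have h'' : (s - q + 1) * s = q := by
    have : (s - q + 1) * s = s * (s - q + 1) + (s * q - q * s) := by noncomm_ring
    rw [this, h', hqc s, sub_self, add_zero]
  constructor
  · rw [← mul_assoc, ← hqic, mul_assoc, h', hq]
  · rw [mul_assoc, h'', hq]

theorem comm_scale {A : Type*} [Ring A] {c d x y : A} (hc : ∀ x, c * x = x * c)
    (hd : ∀ x, d * x = x * d) (h : x * y = y * x) : (c * x) * (d * y) = (d * y) * (c * x) :=
  Commute.mul_left (Commute.mul_right (hc d) (hc y)) (Commute.mul_right (hd x).symm h)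

theorem quad_rel2 (R : Type) [CommRing R] (q : R) :
    (HeckeAlg.S2 R q + 1) * (HeckeAlg.S2 R q - algebraMap R (HeckeAlg R q) q) = 0 := by
  have h1 := HeckeAlg.Tinv_mul_T R q
  have h2 := HeckeAlg.T_mul_Tinv R q
  have h3 := HeckeAlg.T_mul_S2 R q
  have h4 := HeckeAlg.quad_rel R q
  have hc := Algebra.commutes (A := HeckeAlg R q) q (HeckeAlg.T R q)
  generalize algebraMap R (HeckeAlg R q) q = Q at *
  generalize HeckeAlg.T R q = t at *
  generalize HeckeAlg.Tinv R q = ti at *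
  generalize HeckeAlg.S1 R q = a at *
  generalize HeckeAlg.S2 R q = b at *
  have e1 : t * (b + 1) = (a + 1) * t := by rw [mul_add, add_mul, h3, mul_one, one_mul]
  have e2 : t * (b - Q) = (a - Q) * t := by rw [mul_sub, sub_mul, h3, hc]
  have e : t * ((b + 1) * (b - Q)) = 0 := by
    rw [← mul_assoc, e1, mul_assoc, e2, ← mul_assoc, h4, zero_mul]
  calc (b + 1) * (b - Q) = (ti * t) * ((b + 1) * (b - Q)) := by rw [h1, one_mul]
    _ = 0 := by rw [mul_assoc, e, mul_zero]

theorem hecke_Y_main (R : Type) [CommRing R] (q qi : R) (hq : qi * q = 1) :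
    (∀ i : Fin 3, IsUnit (HeckeAlg.Y R q qi i)) ∧
      ∀ i j : Fin 3, HeckeAlg.Y R q qi i * HeckeAlg.Y R q qi j =
        HeckeAlg.Y R q qi j * HeckeAlg.Y R q qi i := by
  have hqq : algebraMap R (HeckeAlg R q) qi * algebraMap R (HeckeAlg R q) q = 1 := by
    rw [← map_mul, hq, map_one]
  have cq : ∀ x, algebraMap R (HeckeAlg R q) q * x = x * algebraMap R (HeckeAlg R q) q :=
    fun x => Algebra.commutes q x
  have cqi : ∀ x, algebraMap R (HeckeAlg R q) qi * x = x * algebraMap R (HeckeAlg R q) qi :=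
    fun x => Algebra.commutes qi x
  have i1 := hecke_inv _ _ _ hqq cq cqi (HeckeAlg.quad_rel R q)
  have i2 := hecke_inv _ _ _ hqq cq cqi (quad_rel2 R q)
  let t : (HeckeAlg R q)ˣ :=
    ⟨HeckeAlg.T R q, HeckeAlg.Tinv R q, HeckeAlg.T_mul_Tinv R q, HeckeAlg.Tinv_mul_T R q⟩
  let a : (HeckeAlg R q)ˣ := ⟨HeckeAlg.S1 R q, HeckeAlg.S1i R q qi, i1.1, i1.2⟩
  let b : (HeckeAlg R q)ˣ := ⟨HeckeAlg.S2 R q, HeckeAlg.S2i R q qi, i2.1, i2.2⟩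
  let u : (HeckeAlg R q)ˣ := ⟨algebraMap R (HeckeAlg R q) q, algebraMap R (HeckeAlg R q) qi,
    (cq _).trans hqq, hqq⟩
  have h3 : t ^ 3 * a = a * t ^ 3 := Units.ext (HeckeAlg.T3_mul_S1 R q)
  have hs : t * b = a * t := Units.ext (HeckeAlg.T_mul_S2 R q)
  have hb : a * b * a = b * a * b := Units.ext (HeckeAlg.braid_rel R q)
  have y0 : HeckeAlg.Y R q qi 0 = (u : HeckeAlg R q) * ((a⁻¹ * b⁻¹ * t : (HeckeAlg R q)ˣ)) := by
    change algebraMap R (HeckeAlg R q) q * HeckeAlg.S1i R q qi * HeckeAlg.S2i R q qi *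
      HeckeAlg.T R q = algebraMap R (HeckeAlg R q) q * (HeckeAlg.S1i R q qi *
        HeckeAlg.S2i R q qi * HeckeAlg.T R q)
    simp only [mul_assoc]
  have y1 : HeckeAlg.Y R q qi 1 =
      ((1 : (HeckeAlg R q)ˣ) : HeckeAlg R q) * ((b⁻¹ * t * a : (HeckeAlg R q)ˣ)) := by
    rw [Units.val_one, one_mul]
    rfl
  have y2 : HeckeAlg.Y R q qi 2 =
      ((u⁻¹ : (HeckeAlg R q)ˣ) : HeckeAlg R q) * ((t * a * b : (HeckeAlg R q)ˣ)) := by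
    change algebraMap R (HeckeAlg R q) qi * HeckeAlg.T R q * HeckeAlg.S1 R q *
      HeckeAlg.S2 R q = algebraMap R (HeckeAlg R q) qi * (HeckeAlg.T R q *
        HeckeAlg.S1 R q * HeckeAlg.S2 R q)
    simp only [mul_assoc]
  have c1 : ∀ x : HeckeAlg R q, ((1 : (HeckeAlg R q)ˣ) : HeckeAlg R q) * x =
      x * ((1 : (HeckeAlg R q)ˣ) : HeckeAlg R q) := by simp
  have k01 : HeckeAlg.Y R q qi 0 * HeckeAlg.Y R q qi 1 =
      HeckeAlg.Y R q qi 1 * HeckeAlg.Y R q qi 0 := by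
    rw [y0, y1]
    exact comm_scale cq c1 (congrArg Units.val (grp_comm12 h3 hs hb))
  have k02 : HeckeAlg.Y R q qi 0 * HeckeAlg.Y R q qi 2 =
      HeckeAlg.Y R q qi 2 * HeckeAlg.Y R q qi 0 := by
    rw [y0, y2]
    exact comm_scale cq cqi (congrArg Units.val (grp_comm13 h3 hs hb))
  have k12 : HeckeAlg.Y R q qi 1 * HeckeAlg.Y R q qi 2 =
      HeckeAlg.Y R q qi 2 * HeckeAlg.Y R q qi 1 := by
    rw [y1, y2]
    exact comm_scale c1 cqi (congrArg Units.val (grp_comm23 h3 hs hb))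
  constructor
  · intro i
    fin_cases i
    · exact y0 ▸ (Units.isUnit _).mul (Units.isUnit _)
    · exact y1 ▸ (Units.isUnit _).mul (Units.isUnit _)
    · exact y2 ▸ (Units.isUnit _).mul (Units.isUnit _)
  · intro i j
    fin_cases i <;> fin_cases j
    exacts [rfl, k01, k02, k01.symm, rfl, k12, k02.symm, k12.symm, rfl]

/-- In `H_{ℤ[q^{±1}]}`, the elements `Y_1, Y_2, Y_3` are invertible and
pairwise commute. -/
theorem statement3 :
    (∀ i : Fin 3, IsUnit (YLau i)) ∧ ∀ i j : Fin 3, YLau i * YLau j = YLau j * YLau i := by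
  exact hecke_Y_main _ _ _ (by rw [← LaurentPolynomial.T_add]; simp)
end

section
/- For an E-algebra homomorphism χ : A_E → E with y_i = χ(Y_i) (1 ≤ i ≤ 3), the standard module I_A(χ) = H_E ⊗_{A_E, χ} E admits an O_E-integral structure if and only if y_1y_2y_3 is a unit of O_E and, for all 1 ≤ i ≠ j ≤ 3, the elements q(y_iy_j), q(y_iy_j)^{-1}, q y_i and q y_i^{-1} all lie in O_E. -/
noncomputable section

variable (p : ℕ) [Fact p.Prime] (E : Type) [Field E] [Algebra ℚ_[p] E]
  [FiniteDimensional ℚ_[p] E] [Algebra ℤ_[p] E] [IsScalarTower ℤ_[p] ℚ_[p] E] (f : ℕ)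

/-- The ring of integers `O_E` of the finite extension `E` of `ℚ_p`:
the integral closure of `ℤ_p` in `E`. -/
abbrev OE : Subalgebra ℤ_[p] E := integralClosure ℤ_[p] E

/-- `q_E = p^f ∈ O_E ⊆ E`, the image of the parameter `q`. -/
def qE : E := (p : E) ^ f

/-- `H_E = H ⊗_{ℤ[q]} E`, realized as the Hecke algebra over `E` with parameter `q_E`. -/
abbrev HE : Type := HeckeAlg E (qE p E f)

/-- The canonical map `H → H_E` (image of `H` in `H_E`). -/
def ιE : HPoly →+* HE p E f :=
  HeckeAlg.map (Polynomial.eval₂RingHom (Int.castRingHom E) (qE p E f)) Polynomial.X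
    (qE p E f) (Polynomial.eval₂_X _ _)

/-- The Bernstein elements `Y_1, Y_2, Y_3` of `H_E`. -/
def YE : Fin 3 → HE p E f := HeckeAlg.Y E (qE p E f) (qE p E f)⁻¹

variable (u : Fin 3 → HE p E f)

/-- `A_E`, the commutative `E`-subalgebra of `H_E` generated by `Y_1^{±1}, Y_2^{±1}, Y_3^{±1}`;
here `u i` denotes the inverse of `Y_i`. -/
abbrev AE : Subalgebra E (HE p E f) :=
  Algebra.adjoin E (Set.range (YE p E f) ∪ Set.range u)

variable (χ : AE p E f u →ₐ[E] E)

/-- The value `y_i = χ(Y_i)` of an `E`-character `χ` of `A_E`. -/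
def yval (i : Fin 3) : E :=
  χ ⟨YE p E f i, Algebra.subset_adjoin (Set.mem_union_left _ ⟨i, rfl⟩)⟩

/-- The left ideal of `H_E` generated by the elements `a - χ(a)`, `a ∈ A_E`. -/
def Jχ : Submodule (HE p E f) (HE p E f) :=
  Submodule.span (HE p E f)
    {x : HE p E f | ∃ a : AE p E f u, x = (a : HE p E f) - algebraMap E (HE p E f) (χ a)}

/-- The standard module `I_A(χ) = H_E ⊗_{A_E, χ} E`, realized as the quotient of `H_E`
by the left ideal generated by the `a - χ(a)`, `a ∈ A_E`. -/
def StdMod : Type := HE p E f ⧸ Jχ p E f u χ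

instance : AddCommGroup (StdMod p E f u χ) := by unfold StdMod; infer_instance
instance : Module (HE p E f) (StdMod p E f u χ) := by unfold StdMod; infer_instance
instance : Module E (StdMod p E f u χ) := by unfold StdMod; infer_instance

/-- `L` is an `O_E`-integral structure of the standard module `I_A(χ)`:
an `O_E`-submodule which is free (it has an `O_E`-basis), stable under the image of `H`
in `H_E`, and contains an `E`-basis of `I_A(χ)`. -/
def IsIntegralStructure (L : Set (StdMod p E f u χ)) : Prop :=
  (0 ∈ L) ∧ (∀ x ∈ L, ∀ y ∈ L, x + y ∈ L) ∧
    (∀ (c : OE p E) (x : StdMod p E f u χ), x ∈ L → (c : E) • x ∈ L) ∧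
    (∀ (h : HPoly) (x : StdMod p E f u χ), x ∈ L → ιE p E f h • x ∈ L) ∧
    (∃ (n : ℕ) (b : Fin n → StdMod p E f u χ), (∀ i, b i ∈ L) ∧
      ∀ x ∈ L, ∃! c : Fin n → OE p E, x = ∑ i, ((c i : E) • b i)) ∧
    (∃ (m : ℕ) (bE : Module.Basis (Fin m) E (StdMod p E f u χ)), ∀ i, bE i ∈ L)

end

theorem aux_val (p : ℕ) [Fact p.Prime] (E : Type) [Field E] [Algebra ℚ_[p] E]
    [FiniteDimensional ℚ_[p] E] [Algebra ℤ_[p] E] [IsScalarTower ℤ_[p] ℚ_[p] E] (x : E) :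
    x ∈ OE p E ∨ x⁻¹ ∈ OE p E := by
  have hIntegral : ∀ y : E, spectralNorm ℚ_[p] E y ≤ 1 → y ∈ OE p E := by
    intro y hy
    have halg : IsIntegral ℚ_[p] y := Algebra.IsIntegral.isIntegral y
    have hm := minpoly.monic halg
    rw [spectralNorm, spectralValue_le_one_iff hm] at hy
    have hl : minpoly ℚ_[p] y ∈ Polynomial.lifts (algebraMap ℤ_[p] ℚ_[p]) := by
      rw [Polynomial.lifts_iff_coeff_lifts]
      intro n
      exact ⟨⟨_, hy n⟩, rfl⟩
    obtain ⟨Q, hQ, -, hQm⟩ := Polynomial.lifts_and_degree_eq_and_monic hl hm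
    refine ⟨Q, hQm, ?_⟩
    have h0 := minpoly.aeval ℚ_[p] y
    rw [← hQ, Polynomial.aeval_def, Polynomial.eval₂_map, ← IsScalarTower.algebraMap_eq] at h0
    exact h0
  by_cases hx : x = 0
  · left; subst hx; exact zero_mem _
  rcases le_total (spectralNorm ℚ_[p] E x) 1 with h | h
  · exact Or.inl (hIntegral x h)
  · right
    apply hIntegral
    have h1 : spectralNorm ℚ_[p] E x * spectralNorm ℚ_[p] E x⁻¹ = 1 := by
      have := spectralAlgNorm_mul (K := ℚ_[p]) x x⁻¹
      rw [mul_inv_cancel₀ hx] at this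
      rw [spectralAlgNorm_one] at this
      exact this.symm
    have := spectralNorm_nonneg (K := ℚ_[p]) x⁻¹
    nlinarith

theorem aux_qmem (p : ℕ) [Fact p.Prime] (E : Type) [Field E] [Algebra ℚ_[p] E]
    [FiniteDimensional ℚ_[p] E] [Algebra ℤ_[p] E] [IsScalarTower ℤ_[p] ℚ_[p] E] (f : ℕ) :
    qE p E f ∈ OE p E := pow_mem (natCast_mem _ _) _

theorem aux_qne (p : ℕ) [Fact p.Prime] (E : Type) [Field E] [Algebra ℚ_[p] E]
    [FiniteDimensional ℚ_[p] E] [Algebra ℤ_[p] E] [IsScalarTower ℤ_[p] ℚ_[p] E] (f : ℕ) :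
    qE p E f ≠ 0 := by
  have : CharZero E := charZero_of_injective_algebraMap (algebraMap ℚ_[p] E).injective
  exact pow_ne_zero _ (Nat.cast_ne_zero.2 (Fact.out : p.Prime).ne_zero)

theorem aux_noeth (p : ℕ) [Fact p.Prime] (E : Type) [Field E] [Algebra ℚ_[p] E]
    [FiniteDimensional ℚ_[p] E] [Algebra ℤ_[p] E] [IsScalarTower ℤ_[p] ℚ_[p] E] :
    IsNoetherianRing (OE p E) := 
  IsIntegralClosure.isNoetherianRing ℤ_[p] ℚ_[p] E (OE p E)

/-- Clearing denominators. -/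
theorem aux_denom (p : ℕ) [Fact p.Prime] (E : Type) [Field E] [Algebra ℚ_[p] E]
    [FiniteDimensional ℚ_[p] E] [Algebra ℤ_[p] E] [IsScalarTower ℤ_[p] ℚ_[p] E]
    {n : ℕ} (x : Fin n → E) : ∃ d : E, d ≠ 0 ∧ ∀ i, d * x i ∈ OE p E := by
  induction n with
  | zero => exact ⟨1, one_ne_zero, fun i => i.elim0⟩
  | succ n ih =>
    obtain ⟨d, hd, h⟩ := ih (fun i => x i.succ)
    by_cases h0 : d * x 0 ∈ OE p E
    · exact ⟨d, hd, fun i => Fin.cases h0 h i⟩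
    · have h1 := (aux_val p E (d * x 0)).resolve_left h0
      have hne : d * x 0 ≠ 0 := fun hh => h0 (hh ▸ zero_mem _)
      refine ⟨(d * x 0)⁻¹ * d, mul_ne_zero (inv_ne_zero hne) hd, fun i => ?_⟩
      rw [mul_assoc]
      refine Fin.cases ?_ (fun j => mul_mem h1 (h j)) i
      rw [inv_mul_cancel₀ hne]; exact one_mem _

/-- The scaling factor used in the lattice. -/
theorem aux_scale (p : ℕ) [Fact p.Prime] (E : Type) [Field E] [Algebra ℚ_[p] E]
    [FiniteDimensional ℚ_[p] E] [Algebra ℤ_[p] E] [IsScalarTower ℤ_[p] ℚ_[p] E]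
    (q a b : E) (ha : a ≠ 0) (hb : b ≠ 0)
    (hq : q ∈ OE p E) (h1 : q * a ∈ OE p E) (h2 : q * a⁻¹ ∈ OE p E)
    (h3 : q * b ∈ OE p E) (h4 : q * b⁻¹ ∈ OE p E) (h5 : q * (a * b) ∈ OE p E)
    (h6 : q * (a * b)⁻¹ ∈ OE p E) :
    ∃ d : E, d ≠ 0 ∧ d⁻¹ ∈ OE p E ∧ q * d ∈ OE p E ∧ a * d⁻¹ ∈ OE p E ∧ q * d * a⁻¹ ∈ OE p E ∧
      (b * d)⁻¹ ∈ OE p E ∧ q * (b * d) ∈ OE p E := by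
  have c1 : a ∈ OE p E → b⁻¹ ∈ OE p E → _ := fun ha' hb' =>
    show ∃ d : E, d ≠ 0 ∧ d⁻¹ ∈ OE p E ∧ q * d ∈ OE p E ∧ a * d⁻¹ ∈ OE p E ∧
      q * d * a⁻¹ ∈ OE p E ∧ (b * d)⁻¹ ∈ OE p E ∧ q * (b * d) ∈ OE p E from
    ⟨1, one_ne_zero, by simp [one_mem], by simpa using hq, by simpa using ha', by simpa using h2,
      by simpa using hb', by simpa using h3⟩
  have c2 : a⁻¹ ∈ OE p E → (a * b)⁻¹ ∈ OE p E → _ := fun ha' hb' =>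
    show ∃ d : E, d ≠ 0 ∧ d⁻¹ ∈ OE p E ∧ q * d ∈ OE p E ∧ a * d⁻¹ ∈ OE p E ∧
      q * d * a⁻¹ ∈ OE p E ∧ (b * d)⁻¹ ∈ OE p E ∧ q * (b * d) ∈ OE p E from
    ⟨a, ha, ha', h1, by simp [ha, one_mem], by simpa [ha, mul_assoc] using hq,
      by rwa [mul_comm b], by rwa [mul_comm b]⟩
  have c3 : b ∈ OE p E → a * b ∈ OE p E → _ := fun ha' hb' =>
    show ∃ d : E, d ≠ 0 ∧ d⁻¹ ∈ OE p E ∧ q * d ∈ OE p E ∧ a * d⁻¹ ∈ OE p E ∧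
      q * d * a⁻¹ ∈ OE p E ∧ (b * d)⁻¹ ∈ OE p E ∧ q * (b * d) ∈ OE p E from
    ⟨b⁻¹, inv_ne_zero hb, by simpa using ha', h4, by simpa using hb',
      by rw [mul_assoc, ← mul_inv, mul_comm b]; exact h6,
      by simp [hb, one_mem], by simpa [hb] using hq⟩
  rcases aux_val p E a with h | h <;> rcases aux_val p E b with h' | h'
  · exact c3 h' (mul_mem h h')
  · exact c1 h h'
  · rcases aux_val p E (a * b) with h'' | h''
    · exact c3 h' h''
    · exact c2 h h''
  · exact c2 h (by rw [mul_inv]; exact mul_mem h h')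

section Rep

variable {E : Type} [Field E] (q : E) (y : Fin 3 → E)

/-- Builds a linear endomorphism of `E ^ 6` from six additive, homogeneous coordinates. -/
def repT : (Fin 6 → E) →ₗ[E] (Fin 6 → E) where
  toFun x := ![q * y 2 * x 3, q * y 2 * x 5, y 1 * x 1, y 1 * x 4, q⁻¹ * y 0 * x 0,
    q⁻¹ * y 0 * x 2]
  map_add' x z := by ext i; fin_cases i <;> simp <;> ring
  map_smul' c x := by ext i; fin_cases i <;> simp <;> ring

def repTinv : (Fin 6 → E) →ₗ[E] (Fin 6 → E) where
  toFun x := ![q * (y 0)⁻¹ * x 4, (y 1)⁻¹ * x 2, q * (y 0)⁻¹ * x 5, q⁻¹ * (y 2)⁻¹ * x 0,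
    (y 1)⁻¹ * x 3, q⁻¹ * (y 2)⁻¹ * x 1]
  map_add' x z := by ext i; fin_cases i <;> simp <;> ring
  map_smul' c x := by ext i; fin_cases i <;> simp <;> ring

def repS1 : (Fin 6 → E) →ₗ[E] (Fin 6 → E) where
  toFun x := ![q * x 1, x 0 + (q - 1) * x 1, q * x 3, x 2 + (q - 1) * x 3, q * x 5,
    x 4 + (q - 1) * x 5]
  map_add' x z := by ext i; fin_cases i <;> simp <;> ring
  map_smul' c x := by ext i; fin_cases i <;> simp <;> ring

def repS2 : (Fin 6 → E) →ₗ[E] (Fin 6 → E) where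
  toFun x := ![q * x 2, q * x 4, x 0 + (q - 1) * x 2, q * x 5, x 1 + (q - 1) * x 4,
    x 3 + (q - 1) * x 5]
  map_add' x z := by ext i; fin_cases i <;> simp <;> ring
  map_smul' c x := by ext i; fin_cases i <;> simp <;> ring

theorem repT_apply (x : Fin 6 → E) : repT q y x = ![q * y 2 * x 3, q * y 2 * x 5, y 1 * x 1,
    y 1 * x 4, q⁻¹ * y 0 * x 0, q⁻¹ * y 0 * x 2] := rfl

theorem repTinv_apply (x : Fin 6 → E) : repTinv q y x = ![q * (y 0)⁻¹ * x 4, (y 1)⁻¹ * x 2,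
    q * (y 0)⁻¹ * x 5, q⁻¹ * (y 2)⁻¹ * x 0, (y 1)⁻¹ * x 3, q⁻¹ * (y 2)⁻¹ * x 1] := rfl

theorem repS1_apply (x : Fin 6 → E) : repS1 q x = ![q * x 1, x 0 + (q - 1) * x 1, q * x 3,
    x 2 + (q - 1) * x 3, q * x 5, x 4 + (q - 1) * x 5] := rfl

theorem repS2_apply (x : Fin 6 → E) : repS2 q x = ![q * x 2, q * x 4, x 0 + (q - 1) * x 2,
    q * x 5, x 1 + (q - 1) * x 4, x 3 + (q - 1) * x 5] := rfl

/-- The images of the four generators. -/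
def repGen : Fin 4 → Module.End E (Fin 6 → E) :=
  ![repT q y, repTinv q y, repS1 q, repS2 q]

/-- The six-dimensional principal series representation. -/
noncomputable def rep (hq : q ≠ 0) (hy : ∀ i, y i ≠ 0) :
    HeckeAlg E q →ₐ[E] Module.End E (Fin 6 → E) :=
  RingQuot.liftAlgHom E ⟨FreeAlgebra.lift E (repGen q y), by
    have h0 := hy 0
    have h1 := hy 1
    have h2 := hy 2
    intro a b hab
    cases hab <;> refine LinearMap.ext fun x => funext fun i => ?_ <;>
    simp only [map_mul, map_one, map_zero, map_add, map_sub, FreeAlgebra.lift_ι_apply,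
      repGen, AlgHom.commutes, pow_succ, pow_zero, one_mul] <;>
    fin_cases i <;>
    simp [Module.End.mul_apply, Module.algebraMap_end_apply, repT_apply, repTinv_apply,
      repS1_apply, repS2_apply, Matrix.vecHead, Matrix.vecTail] <;>
    field_simp <;> ring⟩

theorem rep_gen (hq : q ≠ 0) (hy : ∀ i, y i ≠ 0) (i : Fin 4) :
    rep q y hq hy (HeckeAlg.gen E q i) = repGen q y i := by
  simp [rep, HeckeAlg.gen]

theorem rep_T (hq : q ≠ 0) (hy : ∀ i, y i ≠ 0) :
    rep q y hq hy (HeckeAlg.T E q) = repT q y := rep_gen q y hq hy 0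

theorem rep_Tinv (hq : q ≠ 0) (hy : ∀ i, y i ≠ 0) :
    rep q y hq hy (HeckeAlg.Tinv E q) = repTinv q y := rep_gen q y hq hy 1

theorem rep_S1 (hq : q ≠ 0) (hy : ∀ i, y i ≠ 0) :
    rep q y hq hy (HeckeAlg.S1 E q) = repS1 q := rep_gen q y hq hy 2

theorem rep_S2 (hq : q ≠ 0) (hy : ∀ i, y i ≠ 0) :
    rep q y hq hy (HeckeAlg.S2 E q) = repS2 q := rep_gen q y hq hy 3

/-- The eigenvector. -/
def e0 : Fin 6 → E := ![1, 0, 0, 0, 0, 0]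

theorem rep_Y (hq : q ≠ 0) (hy : ∀ i, y i ≠ 0) (i : Fin 3) :
    rep q y hq hy (HeckeAlg.Y E q q⁻¹ i) e0 = y i • e0 := by
  refine funext fun j => ?_
  fin_cases i <;> 
  simp only [HeckeAlg.Y, HeckeAlg.S1i, HeckeAlg.S2i, Fin.zero_eta, Fin.mk_one, Fin.reduceFinMk, 
    Matrix.cons_val, map_mul, map_add, map_sub, map_one, rep_T, rep_S1, rep_S2, AlgHom.commutes] <;>
  fin_cases j <;>
  simp [Module.End.mul_apply, Module.algebraMap_end_apply, repT_apply, 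
      repS1_apply, repS2_apply, e0, hq] <;>
  field_simp <;> ring

/-- An induction principle for the Hecke algebra. -/
theorem hecke_induction {R : Type} [CommRing R] {q : R} {P : HeckeAlg R q → Prop}
    (hc : ∀ c : R, P (algebraMap R _ c)) (hg : ∀ i, P (HeckeAlg.gen R q i))
    (ha : ∀ a b, P a → P b → P (a + b)) (hm : ∀ a b, P a → P b → P (a * b))
    (h : HeckeAlg R q) : P h := by
  obtain ⟨a, rfl⟩ := RingQuot.mkAlgHom_surjective R (HeckeRel R q) h
  induction a using FreeAlgebra.induction with
  | grade0 r => rw [AlgHom.commutes]; exact hc r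
  | grade1 x => exact hg x
  | mul a b h1 h2 => rw [map_mul]; exact hm _ _ h1 h2
  | add a b h1 h2 => rw [map_add]; exact ha _ _ h1 h2

end Rep

theorem hecke_map_gen {R S : Type} [CommRing R] [CommRing S] (f : R →+* S) (q : R) (q' : S)
    (h : f q = q') (i : Fin 4) :
    HeckeAlg.map f q q' h (HeckeAlg.gen R q i) = HeckeAlg.gen S q' i := by
  subst h
  simp only [HeckeAlg.map, HeckeAlg.gen, RingQuot.mkAlgHom]
  let _ : Algebra R (HeckeAlg S (f q)) :=
    RingHom.toAlgebra' ((algebraMap S (HeckeAlg S (f q))).comp f)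
      (fun c x => by simpa using Algebra.commutes (f c) x)
  refine (RingQuot.lift_mkRingHom_apply _ _ _).trans ?_
  exact FreeAlgebra.lift_ι_apply _ _

theorem hecke_map_algebraMap {R S : Type} [CommRing R] [CommRing S] (f : R →+* S) (q : R) (q' : S)
    (h : f q = q') (c : R) :
    HeckeAlg.map f q q' h (algebraMap R _ c) = algebraMap S _ (f c) := by
  subst h
  rw [← AlgHom.commutes (RingQuot.mkAlgHom R (HeckeRel R q))]
  simp only [HeckeAlg.map, RingQuot.mkAlgHom]
  let _ : Algebra R (HeckeAlg S (f q)) :=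
    RingHom.toAlgebra' ((algebraMap S (HeckeAlg S (f q))).comp f)
      (fun c x => by simpa using Algebra.commutes (f c) x)
  refine (RingQuot.lift_mkRingHom_apply _ _ _).trans ?_
  exact AlgHom.commutes _ _


noncomputable section

theorem quad_aux {A : Type} [Ring A] (S Q : A) (h : (S + 1) * (S - Q) = 0) (hc : Q * S = S * Q) :
    S * S = (Q - 1) * S + Q := by
  have : S * S - ((Q - 1) * S + Q) = (S + 1) * (S - Q) - (Q * S - S * Q) := by noncomm_ring
  rwa [h, hc, sub_self, sub_zero, sub_eq_zero] at this

theorem inv_aux {A : Type} [Ring A] (S Q : A) (h : S * S = (Q - 1) * S + Q)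
    (hc : Q * S = S * Q) : S * (S - Q + 1) = Q := by
  rw [mul_add, mul_sub, h, ← hc]
  noncomm_ring

section Std

set_option linter.unusedSectionVars false

variable (p : ℕ) [Fact p.Prime] (E : Type) [Field E] [Algebra ℚ_[p] E]
  [FiniteDimensional ℚ_[p] E] [Algebra ℤ_[p] E] [IsScalarTower ℤ_[p] ℚ_[p] E] (f : ℕ)
  (u : Fin 3 → HE p E f) (χ : AE p E f u →ₐ[E] E)

/-- The quotient map `H_E → I_A(χ)`. -/
def smk : HE p E f →ₗ[E] StdMod p E f u χ where
  toFun h := (Submodule.Quotient.mk h : HE p E f ⧸ Jχ p E f u χ)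
  map_add' _ _ := rfl
  map_smul' _ _ := rfl

theorem smk_mul (h k : HE p E f) : smk p E f u χ (h * k) = h • smk p E f u χ k := rfl

theorem smk_surj (x : StdMod p E f u χ) : ∃ h, smk p E f u χ h = x :=
  Submodule.Quotient.mk_surjective (Jχ p E f u χ) x

theorem smk_eq_zero {h : HE p E f} : smk p E f u χ h = 0 ↔ h ∈ Jχ p E f u χ :=
  Submodule.Quotient.mk_eq_zero (Jχ p E f u χ)

theorem std_smul_comm (h : HE p E f) (c : E) (x : StdMod p E f u χ) :
    h • (c • x) = c • (h • x) := by
  obtain ⟨k, rfl⟩ := smk_surj p E f u χ x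
  rw [← map_smul, ← smk_mul, ← smk_mul, ← map_smul, mul_smul_comm]

theorem std_algebraMap (c : E) (x : StdMod p E f u χ) :
    (algebraMap E (HE p E f) c) • x = c • x := by
  obtain ⟨k, rfl⟩ := smk_surj p E f u χ x
  rw [← smk_mul, ← map_smul, Algebra.smul_def]

theorem smk_char (h : HE p E f) (a : AE p E f u) :
    smk p E f u χ (h * a) = χ a • smk p E f u χ h := by
  rw [← map_smul, ← sub_eq_zero, ← map_sub, smk_eq_zero]
  have : h * (a : HE p E f) - χ a • h
      = h • ((a : HE p E f) - algebraMap E (HE p E f) (χ a)) := by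
    rw [smul_eq_mul, mul_sub, Algebra.smul_def, Algebra.commutes]
  rw [this]
  exact Submodule.smul_mem _ _ (Submodule.subset_span ⟨a, rfl⟩)

theorem smk_Y (h : HE p E f) (i : Fin 3) :
    smk p E f u χ (h * YE p E f i) = yval p E f u χ i • smk p E f u χ h :=
  smk_char p E f u χ h ⟨YE p E f i, Algebra.subset_adjoin (Set.mem_union_left _ ⟨i, rfl⟩)⟩

theorem chi_u (hu : ∀ i, YE p E f i * u i = 1 ∧ u i * YE p E f i = 1) (i : Fin 3) :
    yval p E f u χ i * χ ⟨u i, Algebra.subset_adjoin (Set.mem_union_right _ ⟨i, rfl⟩)⟩ = 1 := by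
  rw [yval, ← map_mul, ← map_one χ]
  congr 1
  exact Subtype.ext (hu i).1

theorem yval_ne (hu : ∀ i, YE p E f i * u i = 1 ∧ u i * YE p E f i = 1) (i : Fin 3) :
    yval p E f u χ i ≠ 0 := left_ne_zero_of_mul_eq_one (chi_u p E f u χ hu i)

variable (hu : ∀ i, YE p E f i * u i = 1 ∧ u i * YE p E f i = 1)

/-- The principal series representation attached to `χ`. -/
def rho : HE p E f →ₐ[E] Module.End E (Fin 6 → E) :=
  rep (qE p E f) (yval p E f u χ) (aux_qne p E f) (yval_ne p E f u χ hu)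

theorem rho_char (a : HE p E f) (ha : a ∈ AE p E f u) :
    rho p E f u χ hu a e0 = χ ⟨a, ha⟩ • e0 := by
  induction ha using Algebra.adjoin_induction with
  | mem x hx =>
    rcases hx with ⟨i, rfl⟩ | ⟨i, rfl⟩
    · exact rep_Y _ _ _ _ i
    · have h1 : rho p E f u χ hu (YE p E f i) e0 = yval p E f u χ i • e0 := rep_Y _ _ _ _ i
      have h2 := congrArg (fun z => rho p E f u χ hu z e0) (hu i).2
      simp only [map_mul, map_one, Module.End.mul_apply, h1, map_smul, Module.End.one_apply] at h2
      have h3 := chi_u p E f u χ hu i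
      rw [← h2, smul_smul, mul_comm, h3, h2, one_smul]
  | algebraMap r =>
    rw [AlgHom.commutes]
    have : χ ⟨algebraMap E (HE p E f) r, Subalgebra.algebraMap_mem _ _⟩ = r := χ.commutes r
    rw [this]; rfl
  | add x y hx hy h1 h2 =>
    rw [map_add, LinearMap.add_apply, h1, h2, ← add_smul, ← map_add]; rfl
  | mul x y hx hy h1 h2 =>
    rw [map_mul, Module.End.mul_apply, h2, map_smul, h1, smul_smul, mul_comm, ← map_mul]; rfl

theorem rho_J (z : HE p E f) (hz : z ∈ Jχ p E f u χ) : rho p E f u χ hu z e0 = 0 := by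
  induction hz using Submodule.span_induction with
  | mem x hx =>
    obtain ⟨a, rfl⟩ := hx
    rw [map_sub, LinearMap.sub_apply, rho_char p E f u χ hu a a.2, AlgHom.commutes]
    exact sub_self _
  | zero => rw [map_zero]; rfl
  | add x y _ _ h1 h2 => rw [map_add, LinearMap.add_apply, h1, h2, add_zero]
  | smul a x _ h => rw [smul_eq_mul, map_mul, Module.End.mul_apply, h, map_zero]

/-- Lifts of the basis vectors. -/
def gv : Fin 6 → HE p E f :=
  let S1 := HeckeAlg.S1 E (qE p E f)
  let S2 := HeckeAlg.S2 E (qE p E f)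
  ![1, S1, S2, S1 * S2, S2 * S1, S1 * (S2 * S1)]

/-- The map `E ^ 6 → I_A(χ)`. -/
def psi : (Fin 6 → E) →ₗ[E] StdMod p E f u χ :=
  (smk p E f u χ).comp (Fintype.linearCombination E (gv p E f))

theorem rho_gv (x : Fin 6 → E) :
    rho p E f u χ hu (Fintype.linearCombination E (gv p E f) x) e0 = x := by
  funext j
  simp only [Fintype.linearCombination_apply, Fin.sum_univ_six, gv, Matrix.cons_val, rho,
    map_add, map_smul, map_mul, map_one, rep_S1, rep_S2]
  fin_cases j <;> simp [Module.End.mul_apply, repS1_apply, repS2_apply, e0]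

theorem psi_inj (hu : ∀ i, YE p E f i * u i = 1 ∧ u i * YE p E f i = 1) : Function.Injective (psi p E f u χ) := by
  rw [← LinearMap.ker_eq_bot, LinearMap.ker_eq_bot']
  intro x hx
  have := rho_J p E f u χ hu _ ((smk_eq_zero p E f u χ).1 hx)
  rwa [rho_gv] at this

/-- The vector `e_w`. -/
def wv (i : Fin 6) : StdMod p E f u χ := smk p E f u χ (gv p E f i)

theorem psi_eq (x : Fin 6 → E) : psi p E f u χ x =
    x 0 • wv p E f u χ 0 + x 1 • wv p E f u χ 1 + x 2 • wv p E f u χ 2 +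
    x 3 • wv p E f u χ 3 + x 4 • wv p E f u χ 4 + x 5 • wv p E f u χ 5 := by
  simp [psi, wv, Fintype.linearCombination_apply, Fin.sum_univ_six]

theorem S1_sq : HeckeAlg.S1 E (qE p E f) * HeckeAlg.S1 E (qE p E f) =
    (algebraMap E (HE p E f) (qE p E f) - 1) * HeckeAlg.S1 E (qE p E f) +
      algebraMap E (HE p E f) (qE p E f) := by
  have h := HeckeAlg.quad_rel E (qE p E f)
  have hc := Algebra.commutes (qE p E f) (HeckeAlg.S1 E (qE p E f))
  exact quad_aux _ _ h hc

theorem S1_S1 (x : StdMod p E f u χ) :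
    HeckeAlg.S1 E (qE p E f) • HeckeAlg.S1 E (qE p E f) • x =
    (qE p E f - 1) • HeckeAlg.S1 E (qE p E f) • x + qE p E f • x := by
  rw [smul_smul, S1_sq, add_smul, mul_smul, sub_smul, std_algebraMap, std_algebraMap, one_smul,
    sub_smul, one_smul]

theorem S2_conj : HeckeAlg.S2 E (qE p E f) =
    HeckeAlg.Tinv E (qE p E f) * (HeckeAlg.S1 E (qE p E f) * HeckeAlg.T E (qE p E f)) := by
  rw [← HeckeAlg.T_mul_S2, ← mul_assoc, HeckeAlg.Tinv_mul_T, one_mul]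

theorem S2_sq : HeckeAlg.S2 E (qE p E f) * HeckeAlg.S2 E (qE p E f) =
    (algebraMap E (HE p E f) (qE p E f) - 1) * HeckeAlg.S2 E (qE p E f) +
      algebraMap E (HE p E f) (qE p E f) := by
  have h1 := S1_sq p E f
  have h2 : HeckeAlg.T E (qE p E f) * (HeckeAlg.S2 E (qE p E f) * HeckeAlg.S2 E (qE p E f)) =
      HeckeAlg.T E (qE p E f) * ((algebraMap E (HE p E f) (qE p E f) - 1) *
      HeckeAlg.S2 E (qE p E f) + algebraMap E (HE p E f) (qE p E f)) := by
    rw [← mul_assoc, HeckeAlg.T_mul_S2, mul_assoc, HeckeAlg.T_mul_S2, ← mul_assoc, h1, add_mul,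
      mul_add, Algebra.commutes, mul_assoc, ← HeckeAlg.T_mul_S2, sub_mul, sub_mul, mul_sub,
      ← mul_assoc, Algebra.commutes, mul_assoc, one_mul, one_mul]
  have h3 := congrArg (fun z => HeckeAlg.Tinv E (qE p E f) * z) h2
  simpa only [← mul_assoc, HeckeAlg.Tinv_mul_T, one_mul] using h3

theorem S2_S2i : HeckeAlg.S2 E (qE p E f) * HeckeAlg.S2i E (qE p E f) (qE p E f)⁻¹ = 1 := by
  have h := S2_sq p E f
  have hq : algebraMap E (HE p E f) (qE p E f)⁻¹ * algebraMap E (HE p E f) (qE p E f) = 1 := by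
    rw [← map_mul, inv_mul_cancel₀ (aux_qne p E f), map_one]
  rw [HeckeAlg.S2i, ← mul_assoc, ← Algebra.commutes, mul_assoc,
    inv_aux _ _ h (Algebra.commutes (qE p E f) (HeckeAlg.S2 E (qE p E f))), hq]

theorem S1_S1i : HeckeAlg.S1 E (qE p E f) * HeckeAlg.S1i E (qE p E f) (qE p E f)⁻¹ = 1 := by
  have h := S1_sq p E f
  have hq : algebraMap E (HE p E f) (qE p E f)⁻¹ * algebraMap E (HE p E f) (qE p E f) = 1 := by
    rw [← map_mul, inv_mul_cancel₀ (aux_qne p E f), map_one]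
  rw [HeckeAlg.S1i, ← mul_assoc, ← Algebra.commutes, mul_assoc,
    inv_aux _ _ h (Algebra.commutes (qE p E f) (HeckeAlg.S1 E (qE p E f))), hq]

theorem T_w0 : HeckeAlg.T E (qE p E f) • wv p E f u χ 0 =
    ((qE p E f)⁻¹ * yval p E f u χ 0) • wv p E f u χ 4 := by
  have h : HeckeAlg.S2 E (qE p E f) * HeckeAlg.S1 E (qE p E f) * YE p E f 0 =
      qE p E f • HeckeAlg.T E (qE p E f) := by
    have : YE p E f 0 = qE p E f • (HeckeAlg.S1i E (qE p E f) (qE p E f)⁻¹ *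
        (HeckeAlg.S2i E (qE p E f) (qE p E f)⁻¹ * HeckeAlg.T E (qE p E f))) := by
      rw [Algebra.smul_def, ← mul_assoc, ← mul_assoc]; rfl
    rw [this, mul_smul_comm, mul_assoc]
    congr 1
    rw [← mul_assoc (HeckeAlg.S1 E _), S1_S1i, one_mul, ← mul_assoc, S2_S2i, one_mul]
  have h2 := congrArg (smk p E f u χ) h
  rw [smk_Y, map_smul] at h2
  have h3 : HeckeAlg.T E (qE p E f) • wv p E f u χ 0 =
    smk p E f u χ (HeckeAlg.T E (qE p E f)) := by
    simp [wv, gv, ← smk_mul]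
  rw [h3, mul_smul]
  have h4 : wv p E f u χ 4 = smk p E f u χ
    (HeckeAlg.S2 E (qE p E f) * HeckeAlg.S1 E (qE p E f)) := by simp [wv, gv]
  rw [h4, h2, smul_smul, inv_mul_cancel₀ (aux_qne p E f), one_smul]

theorem T_w1 : HeckeAlg.T E (qE p E f) • wv p E f u χ 1 =
    yval p E f u χ 1 • wv p E f u χ 2 := by
  have h : HeckeAlg.S2 E (qE p E f) * YE p E f 1 =
      HeckeAlg.T E (qE p E f) * HeckeAlg.S1 E (qE p E f) := by
    have : YE p E f 1 = HeckeAlg.S2i E (qE p E f) (qE p E f)⁻¹ *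
        (HeckeAlg.T E (qE p E f) * HeckeAlg.S1 E (qE p E f)) := by
      rw [← mul_assoc]; rfl
    rw [this, ← mul_assoc, S2_S2i, one_mul]
  have h2 := congrArg (smk p E f u χ) h
  rw [smk_Y] at h2
  exact h2.symm

theorem T_w3 : HeckeAlg.T E (qE p E f) • wv p E f u χ 3 =
    (qE p E f * yval p E f u χ 2) • wv p E f u χ 0 := by
  have h : HeckeAlg.T E (qE p E f) * (HeckeAlg.S1 E (qE p E f) * HeckeAlg.S2 E (qE p E f)) =
      qE p E f • (1 * YE p E f 2) := by
    have : YE p E f 2 = (qE p E f)⁻¹ • (HeckeAlg.T E (qE p E f) * (HeckeAlg.S1 E (qE p E f) *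
        HeckeAlg.S2 E (qE p E f))) := by
      rw [Algebra.smul_def, ← mul_assoc, ← mul_assoc]; rfl
    rw [one_mul, this, smul_smul, mul_inv_cancel₀ (aux_qne p E f), one_smul]
  have h2 := congrArg (smk p E f u χ) h
  rw [map_smul, smk_Y, smul_smul] at h2
  exact h2

theorem T_S2_smul (x : StdMod p E f u χ) :
    HeckeAlg.T E (qE p E f) • HeckeAlg.S2 E (qE p E f) • x =
    HeckeAlg.S1 E (qE p E f) • HeckeAlg.T E (qE p E f) • x := by
  rw [smul_smul, smul_smul, HeckeAlg.T_mul_S2]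

theorem w1_eq : wv p E f u χ 1 = HeckeAlg.S1 E (qE p E f) • wv p E f u χ 0 := by
  simp [wv, gv, ← smk_mul]
theorem w2_eq : wv p E f u χ 2 = HeckeAlg.S2 E (qE p E f) • wv p E f u χ 0 := by
  simp [wv, gv, ← smk_mul]
theorem w3_eq : wv p E f u χ 3 = HeckeAlg.S1 E (qE p E f) • wv p E f u χ 2 := by
  simp [wv, gv, ← smk_mul]
theorem w4_eq : wv p E f u χ 4 = HeckeAlg.S2 E (qE p E f) • wv p E f u χ 1 := by
  simp [wv, gv, ← smk_mul]
theorem w5_eq : wv p E f u χ 5 = HeckeAlg.S1 E (qE p E f) • wv p E f u χ 4 := by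
  simp [wv, gv, ← smk_mul]
theorem w5_eq' : wv p E f u χ 5 = HeckeAlg.S2 E (qE p E f) • wv p E f u χ 3 := by
  simp only [wv, gv, ← smk_mul, Matrix.cons_val]
  rw [← mul_assoc, HeckeAlg.braid_rel, mul_assoc]

theorem T_w2 : HeckeAlg.T E (qE p E f) • wv p E f u χ 2 =
    ((qE p E f)⁻¹ * yval p E f u χ 0) • wv p E f u χ 5 := by
  rw [w2_eq, T_S2_smul, T_w0, std_smul_comm, w5_eq]

theorem T_w4 : HeckeAlg.T E (qE p E f) • wv p E f u χ 4 =
    yval p E f u χ 1 • wv p E f u χ 3 := by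
  rw [w4_eq, T_S2_smul, T_w1, std_smul_comm, w3_eq]

theorem T_w5 : HeckeAlg.T E (qE p E f) • wv p E f u χ 5 =
    (qE p E f * yval p E f u χ 2) • wv p E f u χ 1 := by
  rw [w5_eq', T_S2_smul, T_w3, std_smul_comm, w1_eq]

theorem psi_T (x : Fin 6 → E) : HeckeAlg.T E (qE p E f) • psi p E f u χ x =
    psi p E f u χ (rho p E f u χ hu (HeckeAlg.T E (qE p E f)) x) := by
  rw [psi_eq, psi_eq, rho, rep_T, repT_apply]
  simp only [smul_add, std_smul_comm, T_w0, T_w1, T_w2, T_w3, T_w4, T_w5, Matrix.cons_val]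
  module

theorem psi_S1 (x : Fin 6 → E) : HeckeAlg.S1 E (qE p E f) • psi p E f u χ x =
    psi p E f u χ (rho p E f u χ hu (HeckeAlg.S1 E (qE p E f)) x) := by
  rw [psi_eq, psi_eq, rho, rep_S1, repS1_apply]
  simp only [w1_eq p E f u χ, w3_eq p E f u χ, w5_eq p E f u χ, smul_add, std_smul_comm, S1_S1, 
    Matrix.cons_val]
  generalize HeckeAlg.S1 E (qE p E f) • wv p E f u χ 0 = a0
  generalize HeckeAlg.S1 E (qE p E f) • wv p E f u χ 2 = a2
  generalize HeckeAlg.S1 E (qE p E f) • wv p E f u χ 4 = a4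
  module

theorem psi_rho (h : HE p E f) (x : Fin 6 → E) : h • psi p E f u χ x =
    psi p E f u χ (rho p E f u χ hu h x) := by
  have hmul : ∀ a b : HE p E f,
      (∀ x, a • psi p E f u χ x = psi p E f u χ (rho p E f u χ hu a x)) →
      (∀ x, b • psi p E f u χ x = psi p E f u χ (rho p E f u χ hu b x)) →
      (∀ x, (a * b) • psi p E f u χ x = psi p E f u χ (rho p E f u χ hu (a * b) x)) := by
    intro a b ha hb x
    rw [mul_smul, hb, ha, map_mul, Module.End.mul_apply]
  have hTinv : ∀ x, HeckeAlg.Tinv E (qE p E f) • psi p E f u χ x =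
      psi p E f u χ (rho p E f u χ hu (HeckeAlg.Tinv E (qE p E f)) x) := by
    intro x
    have h1 := psi_T p E f u χ hu (rho p E f u χ hu (HeckeAlg.Tinv E (qE p E f)) x)
    rw [← Module.End.mul_apply, ← map_mul, HeckeAlg.T_mul_Tinv, map_one, Module.End.one_apply] at h1
    rw [← h1, smul_smul, HeckeAlg.Tinv_mul_T, one_smul]
  have hT := psi_T p E f u χ hu
  have hS1 := psi_S1 p E f u χ hu
  revert x
  induction h using hecke_induction with
  | hc c =>
    intro x
    rw [std_algebraMap, AlgHom.commutes, Module.algebraMap_end_apply, map_smul]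
  | hg i =>
    fin_cases i
    · exact hT
    · exact hTinv
    · exact hS1
    · have := hmul _ _ hTinv (hmul _ _ hS1 hT)
      rw [← S2_conj] at this
      exact this
  | ha a b h1 h2 =>
    intro x
    rw [add_smul, h1, h2, map_add, LinearMap.add_apply, map_add]
  | hm a b h1 h2 => exact hmul a b h1 h2

theorem psi_surj (hu : ∀ i, YE p E f i * u i = 1 ∧ u i * YE p E f i = 1) :
    Function.Surjective (psi p E f u χ) := by
  intro x
  obtain ⟨h, rfl⟩ := smk_surj p E f u χ x
  refine ⟨rho p E f u χ hu h e0, ?_⟩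
  rw [← psi_rho, psi_eq]
  simp [e0, wv, gv, ← smk_mul]

/-- The linear isomorphism `E ^ 6 ≃ I_A(χ)`. -/
def psiE : (Fin 6 → E) ≃ₗ[E] StdMod p E f u χ :=
  LinearEquiv.ofBijective (psi p E f u χ) ⟨psi_inj p E f u χ hu, psi_surj p E f u χ hu⟩

theorem psiE_rho (h : HE p E f) (x : Fin 6 → E) : h • psiE p E f u χ hu x =
    psiE p E f u χ hu (rho p E f u χ hu h x) := psi_rho p E f u χ hu h x

end Std

section Final

set_option linter.unusedSectionVars false

variable (p : ℕ) [Fact p.Prime] (E : Type) [Field E] [Algebra ℚ_[p] E]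
  [FiniteDimensional ℚ_[p] E] [Algebra ℤ_[p] E] [IsScalarTower ℤ_[p] ℚ_[p] E] (f : ℕ)
  (u : Fin 3 → HE p E f) (χ : AE p E f u →ₐ[E] E)
  (hu : ∀ i, YE p E f i * u i = 1 ∧ u i * YE p E f i = 1)

theorem iota_gen (i : Fin 4) :
    ιE p E f (HeckeAlg.gen _ _ i) = HeckeAlg.gen E (qE p E f) i :=
  hecke_map_gen _ _ _ _ i

theorem iota_c (c : Polynomial ℤ) :
    ιE p E f (algebraMap _ _ c) = algebraMap E _ (Polynomial.eval₂ (Int.castRingHom E) (qE p E f) c) :=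
  hecke_map_algebraMap _ _ _ _ c

theorem eval_mem (c : Polynomial ℤ) :
    Polynomial.eval₂ (Int.castRingHom E) (qE p E f) c ∈ OE p E := by
  rw [Polynomial.eval₂_eq_sum_range]
  exact sum_mem fun i _ => mul_mem (intCast_mem _ _) (pow_mem (aux_qmem p E f) _)

theorem eig_mem (L : Set (StdMod p E f u χ)) (hL : IsIntegralStructure p E f u χ L)
    (g : HPoly) (l : E)
    (hg : rho p E f u χ hu (ιE p E f g) e0 = l • e0) : l ∈ OE p E := by
  obtain ⟨h0, hadd, hsm, hst, ⟨n, b, hbL, hb⟩, m, bE, hbE⟩ := hL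
  have := aux_noeth p E
  let N1 : Submodule (OE p E) (StdMod p E f u χ) :=
    { carrier := L
      zero_mem' := h0
      add_mem' := fun ha hb => hadd _ ha _ hb
      smul_mem' := fun c x hx => hsm c x hx }
  have hN1 : N1.FG := by
    refine Submodule.fg_def.2 ⟨Set.range b, Set.finite_range b, le_antisymm ?_ ?_⟩
    · rw [Submodule.span_le]
      rintro _ ⟨i, rfl⟩
      exact hbL i
    · intro x hx
      obtain ⟨c, hc, -⟩ := hb x hx
      rw [hc]
      exact Submodule.sum_mem _ fun i _ =>
        Submodule.smul_mem _ (c i) (Submodule.subset_span ⟨i, rfl⟩)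
  let N : Submodule (OE p E) (StdMod p E f u χ) :=
    { carrier := {x | x ∈ L ∧ ιE p E f g • x = l • x}
      zero_mem' := ⟨h0, by rw [smul_zero, smul_zero]⟩
      add_mem' := fun ha hb => ⟨hadd _ ha.1 _ hb.1, by rw [smul_add, smul_add, ha.2, hb.2]⟩
      smul_mem' := fun c x hx => ⟨hsm c x hx.1, by
        change ιE p E f g • ((c : E) • x) = l • ((c : E) • x)
        rw [std_smul_comm, hx.2, smul_comm]⟩ }
  have hle : N ≤ N1 := fun x hx => hx.1
  have hNfg : N.FG := by
    have : IsNoetherian (OE p E) N1 := isNoetherian_of_fg_of_noetherian N1 hN1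
    exact Submodule.FG.of_le hN1 hle
  -- a nonzero multiple of the eigenvector
  let v := psiE p E f u χ hu e0
  have hv0 : v ≠ 0 := by
    intro h
    have := congrFun ((psiE p E f u χ hu).map_eq_zero_iff.1 h) 0
    simp [e0] at this
  have hv : ιE p E f g • v = l • v := by
    rw [psiE_rho, hg, map_smul]
  obtain ⟨d, hd, hdm⟩ := aux_denom p E (fun i => bE.repr v i)
  have hdv : d • v ∈ L := by
    rw [← bE.sum_repr v, Finset.smul_sum]
    refine N1.sum_mem fun i _ => ?_
    rw [smul_smul]
    exact hsm ⟨_, hdm i⟩ _ (hbE i)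
  have hNb : N ≠ ⊥ := by
    intro h
    have : d • v ∈ N := ⟨hdv, by rw [std_smul_comm, hv, smul_comm]⟩
    rw [h, Submodule.mem_bot, smul_eq_zero] at this
    exact this.elim hd hv0
  have hIntegral : IsIntegral (OE p E) l := by
    refine isIntegral_of_smul_mem_submodule N hNb hNfg l ?_
    intro x hx
    have h1 : l • x ∈ L := hx.2 ▸ hst g x hx.1
    exact ⟨h1, by rw [std_smul_comm, hx.2]⟩
  exact isIntegral_trans (R := ℤ_[p]) (A := OE p E) l hIntegral

theorem forward (hu : ∀ i, YE p E f i * u i = 1 ∧ u i * YE p E f i = 1)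
    (L : Set (StdMod p E f u χ)) (hL : IsIntegralStructure p E f u χ L) :
    (yval p E f u χ 0 * yval p E f u χ 1 * yval p E f u χ 2 ∈ OE p E ∧
       (yval p E f u χ 0 * yval p E f u χ 1 * yval p E f u χ 2)⁻¹ ∈ OE p E) ∧
       ∀ i : Fin 3, qE p E f * yval p E f u χ i ∈ OE p E ∧
         qE p E f * (yval p E f u χ i)⁻¹ ∈ OE p E := by
  have key := eig_mem p E f u χ hu L hL
  have hq := aux_qne p E f
  have y0 := yval_ne p E f u χ hu 0
  have y1 := yval_ne p E f u χ hu 1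
  have y2 := yval_ne p E f u χ hu 2
  let T : HPoly := HeckeAlg.gen _ _ 0
  let Ti : HPoly := HeckeAlg.gen _ _ 1
  let S1 : HPoly := HeckeAlg.gen _ _ 2
  let S2 : HPoly := HeckeAlg.gen _ _ 3
  let Q : HPoly := algebraMap (Polynomial ℤ) HPoly Polynomial.X
  have hT : rho p E f u χ hu (ιE p E f T) = repT (qE p E f) (yval p E f u χ) := by
    rw [iota_gen]; exact rep_T _ _ _ _
  have hTi : rho p E f u χ hu (ιE p E f Ti) = repTinv (qE p E f) (yval p E f u χ) := by
    rw [iota_gen]; exact rep_Tinv _ _ _ _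
  have hS1 : rho p E f u χ hu (ιE p E f S1) = repS1 (qE p E f) := by
    rw [iota_gen]; exact rep_S1 _ _ _ _
  have hS2 : rho p E f u χ hu (ιE p E f S2) = repS2 (qE p E f) := by
    rw [iota_gen]; exact rep_S2 _ _ _ _
  have hQ : rho p E f u χ hu (ιE p E f Q) = algebraMap E _ (qE p E f) := by
    rw [iota_c, AlgHom.commutes, Polynomial.eval₂_X]
  have ev : ∀ (g : HPoly) (l : E),
      (∀ j, rho p E f u χ hu (ιE p E f g) e0 j = l * e0 j) → l ∈ OE p E :=
    fun g l h => key g l (funext h)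
  have a0 := ev ((S1 - Q + 1) * ((S2 - Q + 1) * T)) (qE p E f * yval p E f u χ 0) (by
    intro j
    simp only [map_mul, map_sub, map_add, map_one, hT, hS1, hS2, hQ]
    fin_cases j <;> simp [Module.End.mul_apply, Module.algebraMap_end_apply, repT_apply,
      repS1_apply, repS2_apply, e0, hq] <;> field_simp <;> ring)
  have a1 := ev ((S2 - Q + 1) * (T * S1)) (qE p E f * yval p E f u χ 1) (by
    intro j
    simp only [map_mul, map_sub, map_add, map_one, hT, hS1, hS2, hQ]
    fin_cases j <;> simp [Module.End.mul_apply, Module.algebraMap_end_apply, repT_apply,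
      repS1_apply, repS2_apply, e0] <;> ring)
  have a2 := ev (T * (S1 * S2)) (qE p E f * yval p E f u χ 2) (by
    intro j
    simp only [map_mul, hT, hS1, hS2]
    fin_cases j <;> simp [Module.End.mul_apply, repT_apply, repS1_apply, repS2_apply, e0])
  have b0 := ev (Ti * (S2 * S1)) (qE p E f * (yval p E f u χ 0)⁻¹) (by
    intro j
    simp only [map_mul, hTi, hS1, hS2]
    fin_cases j <;> simp [Module.End.mul_apply, repTinv_apply, repS1_apply, repS2_apply, e0])
  have b1 := ev ((S1 - Q + 1) * (Ti * S2)) (qE p E f * (yval p E f u χ 1)⁻¹) (by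
    intro j
    simp only [map_mul, map_sub, map_add, map_one, hTi, hS1, hS2, hQ]
    fin_cases j <;> simp [Module.End.mul_apply, Module.algebraMap_end_apply, repTinv_apply,
      repS1_apply, repS2_apply, e0] <;> ring)
  have b2 := ev ((S2 - Q + 1) * ((S1 - Q + 1) * Ti)) (qE p E f * (yval p E f u χ 2)⁻¹) (by
    intro j
    simp only [map_mul, map_sub, map_add, map_one, hTi, hS1, hS2, hQ]
    fin_cases j <;> simp [Module.End.mul_apply, Module.algebraMap_end_apply, repTinv_apply,
      repS1_apply, repS2_apply, e0, hq] <;> field_simp <;> ring)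
  have c0 := ev (T * (T * T)) (yval p E f u χ 0 * yval p E f u χ 1 * yval p E f u χ 2) (by
    intro j
    simp only [map_mul, hT]
    fin_cases j <;> simp [Module.End.mul_apply, repT_apply, e0] <;> field_simp)
  have c1 := ev (Ti * (Ti * Ti)) (yval p E f u χ 0 * yval p E f u χ 1 * yval p E f u χ 2)⁻¹ (by
    intro j
    simp only [map_mul, hTi]
    fin_cases j <;> simp [Module.End.mul_apply, repTinv_apply, e0] <;> field_simp)
  refine ⟨⟨c0, c1⟩, fun i => ?_⟩
  fin_cases i
  · exact ⟨a0, b0⟩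
  · exact ⟨a1, b1⟩
  · exact ⟨a2, b2⟩

/-- The scaling factors of the lattice. -/
def cf (q d : E) (y : Fin 3 → E) : Fin 6 → E :=
  ![1, d, d * y 1, y 0 * y 1 * q⁻¹, y 0 * q⁻¹, d * (y 0 * y 1 * q⁻¹)]

theorem cf_ne (q d : E) (y : Fin 3 → E) (hq : q ≠ 0) (hd : d ≠ 0) (hy : ∀ i, y i ≠ 0) (i : Fin 6) :
    cf E q d y i ≠ 0 := by
  have := hy 0
  have := hy 1
  fin_cases i <;> simp [cf, *]

theorem lat_T (q d : E) (y : Fin 3 → E) (hq : q ≠ 0) (hd : d ≠ 0) (hy : ∀ i, y i ≠ 0)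
    (hU : y 0 * y 1 * y 2 ∈ OE p E) (z : Fin 6 → E)
    (hz : ∀ i, (cf E q d y i)⁻¹ * z i ∈ OE p E) (i : Fin 6) :
    (cf E q d y i)⁻¹ * repT q y z i ∈ OE p E := by
  have h0 := hy 0
  have h1 := hy 1
  have h2 := hy 2
  have k : ∀ (i j : Fin 6) (t : E), t ∈ OE p E →
      (cf E q d y i)⁻¹ * repT q y z i = t * ((cf E q d y j)⁻¹ * z j) →
      (cf E q d y i)⁻¹ * repT q y z i ∈ OE p E := fun i j t ht h => h ▸ mul_mem ht (hz j)
  fin_cases i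
  · refine k 0 3 _ hU ?_
    simp [cf, repT_apply]; field_simp
  · refine k 1 5 _ hU ?_
    simp [cf, repT_apply]; field_simp
  · refine k 2 1 1 (one_mem _) ?_
    simp [cf, repT_apply]; field_simp
  · refine k 3 4 1 (one_mem _) ?_
    simp [cf, repT_apply]; field_simp
  · refine k 4 0 1 (one_mem _) ?_
    simp [cf, repT_apply]; field_simp
  · refine k 5 2 1 (one_mem _) ?_
    simp [cf, repT_apply]; field_simp

theorem lat_Tinv (q d : E) (y : Fin 3 → E) (hq : q ≠ 0) (hd : d ≠ 0) (hy : ∀ i, y i ≠ 0)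
    (hU : (y 0 * y 1 * y 2)⁻¹ ∈ OE p E) (z : Fin 6 → E)
    (hz : ∀ i, (cf E q d y i)⁻¹ * z i ∈ OE p E) (i : Fin 6) :
    (cf E q d y i)⁻¹ * repTinv q y z i ∈ OE p E := by
  have h0 := hy 0
  have h1 := hy 1
  have h2 := hy 2
  have k : ∀ (i j : Fin 6) (t : E), t ∈ OE p E →
      (cf E q d y i)⁻¹ * repTinv q y z i = t * ((cf E q d y j)⁻¹ * z j) →
      (cf E q d y i)⁻¹ * repTinv q y z i ∈ OE p E := fun i j t ht h => h ▸ mul_mem ht (hz j)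
  fin_cases i
  · refine k 0 4 1 (one_mem _) ?_
    simp [cf, repTinv_apply]
  · refine k 1 2 1 (one_mem _) ?_
    simp [cf, repTinv_apply]; field_simp
  · refine k 2 5 1 (one_mem _) ?_
    simp [cf, repTinv_apply]; field_simp
  · refine k 3 0 _ hU ?_
    simp [cf, repTinv_apply]; field_simp
  · refine k 4 3 1 (one_mem _) ?_
    simp [cf, repTinv_apply]; field_simp
  · refine k 5 1 _ hU ?_
    simp [cf, repTinv_apply]; field_simp

theorem lat_S1 (q d : E) (y : Fin 3 → E) (hq : q ≠ 0) (hd : d ≠ 0) (hy : ∀ i, y i ≠ 0)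
    (hqm : q ∈ OE p E) (d1 : d⁻¹ ∈ OE p E) (d2 : q * d ∈ OE p E) (d3 : y 0 * d⁻¹ ∈ OE p E)
    (d4 : q * d * (y 0)⁻¹ ∈ OE p E) (d5 : (y 1 * d)⁻¹ ∈ OE p E) (d6 : q * (y 1 * d) ∈ OE p E)
    (z : Fin 6 → E) (hz : ∀ i, (cf E q d y i)⁻¹ * z i ∈ OE p E) (i : Fin 6) :
    (cf E q d y i)⁻¹ * repS1 q z i ∈ OE p E := by
  have h0 := hy 0
  have h1 := hy 1
  have hq1 : q - 1 ∈ OE p E := sub_mem hqm (one_mem _)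
  have k : ∀ (i j j' : Fin 6) (t s : E), t ∈ OE p E → s ∈ OE p E →
      (cf E q d y i)⁻¹ * repS1 q z i = t * ((cf E q d y j)⁻¹ * z j) +
        s * ((cf E q d y j')⁻¹ * z j') →
      (cf E q d y i)⁻¹ * repS1 q z i ∈ OE p E :=
    fun i j j' t s ht hs h => h ▸ add_mem (mul_mem ht (hz j)) (mul_mem hs (hz j'))
  fin_cases i
  · refine k 0 1 0 _ 0 d2 (zero_mem _) ?_
    simp [cf, repS1_apply]; field_simp
  · refine k 1 0 1 _ _ d1 hq1 ?_
    simp [cf, repS1_apply]; field_simp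
  · refine k 2 3 0 _ 0 d3 (zero_mem _) ?_
    simp [cf, repS1_apply]; field_simp
  · refine k 3 2 3 _ _ d4 hq1 ?_
    simp [cf, repS1_apply]; field_simp
  · refine k 4 5 0 _ 0 d6 (zero_mem _) ?_
    simp [cf, repS1_apply]; field_simp
  · refine k 5 4 5 _ _ d5 hq1 ?_
    simp [cf, repS1_apply]; field_simp

theorem backward (hu : ∀ i, YE p E f i * u i = 1 ∧ u i * YE p E f i = 1)
    (hU : yval p E f u χ 0 * yval p E f u χ 1 * yval p E f u χ 2 ∈ OE p E)
    (hUi : (yval p E f u χ 0 * yval p E f u χ 1 * yval p E f u χ 2)⁻¹ ∈ OE p E)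
    (h : ∀ i j : Fin 3, i ≠ j →
         qE p E f * (yval p E f u χ i * yval p E f u χ j) ∈ OE p E ∧
         qE p E f * (yval p E f u χ i * yval p E f u χ j)⁻¹ ∈ OE p E ∧
         qE p E f * yval p E f u χ i ∈ OE p E ∧
         qE p E f * (yval p E f u χ i)⁻¹ ∈ OE p E) :
    ∃ L : Set (StdMod p E f u χ), IsIntegralStructure p E f u χ L := by
  have hy := yval_ne p E f u χ hu
  have hq := aux_qne p E f
  have hqm := aux_qmem p E f
  obtain ⟨k1, k2, k3, k4⟩ := h 0 1 (by decide)
  obtain ⟨-, -, k5, k6⟩ := h 1 0 (by decide)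
  obtain ⟨d, hd, d1, d2, d3, d4, d5, d6⟩ :=
    aux_scale p E (qE p E f) (yval p E f u χ 0) (yval p E f u χ 1) (hy 0) (hy 1) hqm k3 k4 k5 k6
      k1 k2
  let c := cf E (qE p E f) d (yval p E f u χ)
  have hc : ∀ i, c i ≠ 0 := cf_ne E _ d _ hq hd hy
  let φ : StdMod p E f u χ ≃ₗ[E] (Fin 6 → E) := (psiE p E f u χ hu).symm.trans
    (LinearEquiv.piCongrRight fun i =>
      LinearEquiv.smulOfNeZero E E (c i)⁻¹ (inv_ne_zero (hc i)))
  have hφ : ∀ x i, φ x i = (c i)⁻¹ * (psiE p E f u χ hu).symm x i := fun x i => rfl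
  have hsym : ∀ (g : HE p E f) x, (psiE p E f u χ hu).symm (g • x) =
      rho p E f u χ hu g ((psiE p E f u χ hu).symm x) := by
    intro g x
    rw [LinearEquiv.symm_apply_eq, ← psiE_rho, LinearEquiv.apply_symm_apply]
  let L : Set (StdMod p E f u χ) := {x | ∀ i, φ x i ∈ OE p E}
  have hmul : ∀ a b : HE p E f, (∀ x ∈ L, a • x ∈ L) → (∀ x ∈ L, b • x ∈ L) →
      (∀ x ∈ L, (a * b) • x ∈ L) := by
    intro a b ha hb x hx
    rw [mul_smul]
    exact ha _ (hb _ hx)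
  have hadd : ∀ x ∈ L, ∀ y ∈ L, x + y ∈ L := by
    intro x hx y hy i
    rw [map_add]
    exact add_mem (hx i) (hy i)
  have hsm : ∀ (c : OE p E) (x : StdMod p E f u χ), x ∈ L → (c : E) • x ∈ L := by
    intro c x hx i
    rw [map_smul]
    exact mul_mem c.2 (hx i)
  have hT : ∀ x ∈ L, HeckeAlg.T E (qE p E f) • x ∈ L := by
    intro x hx i
    rw [hφ, hsym, rho, rep_T]
    exact lat_T p E _ d _ hq hd hy hU _ hx i
  have hTi : ∀ x ∈ L, HeckeAlg.Tinv E (qE p E f) • x ∈ L := by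
    intro x hx i
    rw [hφ, hsym, rho, rep_Tinv]
    exact lat_Tinv p E _ d _ hq hd hy hUi _ hx i
  have hS1 : ∀ x ∈ L, HeckeAlg.S1 E (qE p E f) • x ∈ L := by
    intro x hx i
    rw [hφ, hsym, rho, rep_S1]
    exact lat_S1 p E _ d _ hq hd hy hqm d1 d2 d3 d4 d5 d6 _ hx i
  have hS2 : ∀ x ∈ L, HeckeAlg.S2 E (qE p E f) • x ∈ L := by
    rw [S2_conj]
    exact hmul _ _ hTi (hmul _ _ hS1 hT)
  let b := Module.Basis.ofEquivFun φ
  have hb : ∀ x, x = ∑ i, φ x i • b i := fun x => (b.sum_equivFun x).symm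
  have hbφ : ∀ i, φ (b i) = Pi.single i 1 := by
    intro i
    simp [b, Module.Basis.coe_ofEquivFun]
  have hbL : ∀ i, b i ∈ L := by
    intro i j
    rw [hbφ]
    by_cases hij : j = i
    · subst hij; rw [Pi.single_eq_same]; exact one_mem _
    · rw [Pi.single_eq_of_ne hij]; exact zero_mem _
  refine ⟨L, ?_, hadd, hsm, ?_, ⟨6, b, hbL, ?_⟩, 6, b, hbL⟩
  · intro i
    rw [map_zero]
    exact zero_mem _
  · intro g
    induction g using hecke_induction with
    | hc c =>
      intro x hx
      rw [iota_c, std_algebraMap]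
      exact hsm ⟨_, eval_mem p E f c⟩ x hx
    | hg i =>
      rw [iota_gen]
      fin_cases i
      · exact hT
      · exact hTi
      · exact hS1
      · exact hS2
    | ha g1 g2 h1 h2 =>
      intro x hx
      rw [map_add, add_smul]
      exact hadd _ (h1 x hx) _ (h2 x hx)
    | hm g1 g2 h1 h2 =>
      rw [map_mul]
      exact hmul _ _ h1 h2
  · intro x hx
    refine ⟨fun i => ⟨φ x i, hx i⟩, hb x, ?_⟩
    intro c' hc'
    have h1 : φ x = fun i => (c' i : E) := by
      have : φ.symm (fun i => (c' i : E)) = x := by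
        rw [hc']
        exact (b.equivFun_symm_apply _)
      rw [← this, LinearEquiv.apply_symm_apply]
    funext i
    exact Subtype.ext (congrFun h1 i).symm

theorem swap_aux (q a b c : E) (ha : a ≠ 0) (hb : b ≠ 0) (hc : c ≠ 0) (h1 : a * b * c ∈ OE p E)
    (h2 : (a * b * c)⁻¹ ∈ OE p E) (h3 : q * c ∈ OE p E) (h4 : q * c⁻¹ ∈ OE p E) :
    q * (a * b) ∈ OE p E ∧ q * (a * b)⁻¹ ∈ OE p E := by
  have e1 : q * (a * b) = q * c⁻¹ * (a * b * c) := by field_simp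
  have e2 : q * (a * b)⁻¹ = q * c * (a * b * c)⁻¹ := by field_simp
  rw [e1, e2]
  exact ⟨mul_mem h4 h1, mul_mem h3 h2⟩

end Final


end

/-- For an `E`-algebra homomorphism `χ : A_E → E` with `y_i = χ(Y_i)`,
the standard module `I_A(χ) = H_E ⊗_{A_E, χ} E` admits an `O_E`-integral structure if and
only if `y_1y_2y_3` is a unit of `O_E` and, for all `1 ≤ i ≠ j ≤ 3`, the elements
`q(y_iy_j)`, `q(y_iy_j)⁻¹`, `q y_i` and `q y_i⁻¹` all lie in `O_E`. -/
theorem statement5 (p : ℕ) [Fact p.Prime] (E : Type) [Field E] [Algebra ℚ_[p] E]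
    [FiniteDimensional ℚ_[p] E] [Algebra ℤ_[p] E] [IsScalarTower ℤ_[p] ℚ_[p] E]
    (f : ℕ) (hf : 0 < f) (u : Fin 3 → HE p E f)
    (hu : ∀ i, YE p E f i * u i = 1 ∧ u i * YE p E f i = 1)
    (χ : AE p E f u →ₐ[E] E) :
    (∃ L : Set (StdMod p E f u χ), IsIntegralStructure p E f u χ L) ↔
      (yval p E f u χ 0 * yval p E f u χ 1 * yval p E f u χ 2 ∈ OE p E ∧
       (yval p E f u χ 0 * yval p E f u χ 1 * yval p E f u χ 2)⁻¹ ∈ OE p E ∧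
       ∀ i j : Fin 3, i ≠ j →
         qE p E f * (yval p E f u χ i * yval p E f u χ j) ∈ OE p E ∧
         qE p E f * (yval p E f u χ i * yval p E f u χ j)⁻¹ ∈ OE p E ∧
         qE p E f * yval p E f u χ i ∈ OE p E ∧
         qE p E f * (yval p E f u χ i)⁻¹ ∈ OE p E) := by
  have y0 := yval_ne p E f u χ hu
  constructor
  · rintro ⟨L, hL⟩
    obtain ⟨⟨h1, h2⟩, h3⟩ := forward p E f u χ hu L hL
    refine ⟨h1, h2, fun i j hij => ?_⟩
    obtain ⟨k, hk⟩ : ∃ k, yval p E f u χ i * yval p E f u χ j * yval p E f u χ k =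
        yval p E f u χ 0 * yval p E f u χ 1 * yval p E f u χ 2 := by
      fin_cases i <;> fin_cases j
      · exact absurd rfl hij
      · exact ⟨2, rfl⟩
      · exact ⟨1, by simp only [Fin.zero_eta, Fin.reduceFinMk]; ring⟩
      · exact ⟨2, by simp only [Fin.zero_eta, Fin.mk_one]; ring⟩
      · exact absurd rfl hij
      · exact ⟨0, by simp only [Fin.mk_one, Fin.reduceFinMk]; ring⟩
      · exact ⟨1, by simp only [Fin.zero_eta, Fin.reduceFinMk]; ring⟩
      · exact ⟨0, by simp only [Fin.mk_one, Fin.reduceFinMk]; ring⟩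
      · exact absurd rfl hij
    rw [← hk] at h1 h2
    obtain ⟨h4, h5⟩ := swap_aux p E (qE p E f) _ _ _ (y0 i) (y0 j) (y0 k) h1 h2 (h3 k).1 (h3 k).2
    exact ⟨h4, h5, (h3 i).1, (h3 i).2⟩
  · rintro ⟨h1, h2, h3⟩
    exact backward p E f u χ hu h1 h2 h3
end
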